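/- arXiv:1907.11476 — 3 statements merged into one kernel-verified Lean document; each statement's English description precedes it below -/
import Mathlib

section
/- Let 2 ≤ q < ∞ and let φ : ℕ → ℂ. Then φ belongs to R₊(T_q), i.e. the kernel (x,y) ↦ φ(d(x,y)) is positive definite on the (q+1)-homogeneous tree T_q, if and only if there exists a positive finite Borel measure μ on the interval [-1,1] such that φ(n) = ∫_{[-1,1]} P_n^{(q)}(s) dμ(s) for all n ∈ ℕ. -/
/-!
Both directions rest on one fact about the tree: among the neighbours of `x ≠ y` exactly one is
closer to `y`, and all others are farther by one.

*Measure to kernel.* By integration it suffices that `(x, y) ↦ P_{d(x,y)}(s)` is positive definite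
for each `s ∈ [-1, 1]` (`treeP_radForm_nonneg`). Every finite set of vertices lies in a
geodesically convex set obtained from one point by successively adding a neighbour `c` of a point
`x` already present. If `u` runs over the `k ≤ q` neighbours of `x` already present, the recurrence
shows that `c` has the same inner products with the old points as
`α = ((q+1) s δ_x - ∑ δ_u) / (q+1-k)`, and the squared norm of `δ_c` minus that of `α` is
`(q+1)(1-s²)(q-k) / (q (q+1-k)) ≥ 0`; so positivity persists (`treeP_extend`).

*Kernel to measure.* The tree exists (`wordTree`), and `φ` is real and bounded by `φ 0`. Averaging
over neighbours acts on radial functions by an operator `T` (`radT`), and `L p = (p(T) φ)(0)` is a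
linear functional on polynomials with `L P_n = φ n`. Since averaging is symmetric for the form with
kernel `φ (d(x, y))`, `L (p²)` is the value of that form at `p(avg) δ_o`, hence nonnegative; and the
moments `L (X^m)` are bounded by `φ 0`. Cauchy–Schwarz iteration upgrades this to
`L ((1 ± X) r²) ≥ 0`, so `L` is nonnegative on the Bernstein basis of `[-1, 1]` and therefore on all
polynomials nonnegative there (`nonneg_of_moments`). The M. Riesz extension theorem and the
Riesz–Markov–Kakutani theorem then produce the measure (`exists_measure_of_moments`).
-/

open MeasureTheory Filter Finset
open scoped ComplexOrder

/-- The polynomials `P_n^{(q)}`. -/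
noncomputable def treeP (q : ℕ) : ℕ → ℝ → ℝ
  | 0, _ => 1
  | 1, x => x
  | (n+2), x => (1 + 1/(q:ℝ)) * x * treeP q (n+1) x - (1/(q:ℝ)) * treeP q n x

/-- The polynomials `Q_n^{(q)}`. -/
noncomputable def treeQ (q : ℕ) : ℕ → ℝ → ℝ
  | 0, _ => 1
  | 1, x => (1 + 1/(q:ℝ)) * x
  | (n+2), x => (1 + 1/(q:ℝ)) * x * treeQ q (n+1) x - (1/(q:ℝ)) * treeQ q n x

/-- A kernel `ψ` on a set `X` is positive definite. -/
def IsPDKernel {X : Type*} (ψ : X → X → ℂ) : Prop :=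
  ∀ (n : ℕ) (x : Fin n → X) (z : Fin n → ℂ),
    0 ≤ ∑ i, ∑ j, ψ (x i) (x j) * (starRingEnd ℂ) (z i) * z j

/-- `G` is a `(q+1)`-homogeneous tree: connected, acyclic, every vertex has exactly
`q+1` neighbours. -/
def IsHomTree {V : Type} (G : SimpleGraph V) (q : ℕ) : Prop :=
  G.Connected ∧ G.IsAcyclic ∧ ∀ v : V, (G.neighborSet v).ncard = q + 1

/-- `G` is a homogeneous tree of countably infinite degree. -/
def IsInfTree {V : Type} (G : SimpleGraph V) : Prop :=
  G.Connected ∧ G.IsAcyclic ∧ ∀ v : V, (G.neighborSet v).Countable ∧ (G.neighborSet v).Infinite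

/-! ### Geometry of a homogeneous tree -/

section Tree

variable {V : Type} {G : SimpleGraph V} {q : ℕ}

lemma IsHomTree.isTree (h : IsHomTree G q) : G.IsTree := ⟨h.1, h.2.1⟩

lemma IsHomTree.closer_unique (h : IsHomTree G q) {x y u u' : V}
    (hu : G.Adj x u) (hu' : G.Adj x u') (hd : G.dist u y + 1 = G.dist x y)
    (hd' : G.dist u' y + 1 = G.dist x y) : u = u' := by
  obtain ⟨p, hp⟩ := h.1.exists_walk_length_eq_dist u y
  obtain ⟨p', hp'⟩ := h.1.exists_walk_length_eq_dist u' y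
  have h1 : (SimpleGraph.Walk.cons hu p).IsPath :=
    SimpleGraph.Walk.isPath_of_length_eq_dist _ (by simp [hp, hd])
  have h2 : (SimpleGraph.Walk.cons hu' p').IsPath :=
    SimpleGraph.Walk.isPath_of_length_eq_dist _ (by simp [hp', hd'])
  have h3 := (h.2.1.subsingleton_path x y).elim ⟨_, h1⟩ ⟨_, h2⟩
  have h4 := congrArg (fun r : G.Path x y => (r : G.Walk x y).snd) h3
  simpa using h4

lemma IsHomTree.exists_closer (h : IsHomTree G q) {x y : V} (hxy : x ≠ y) :
    ∃ u, G.Adj x u ∧ G.dist u y + 1 = G.dist x y := by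
  obtain ⟨p, hp⟩ := h.1.exists_walk_length_eq_dist x y
  cases p with
  | nil => exact absurd rfl hxy
  | @cons _ u _ hu p =>
    refine ⟨u, hu, ?_⟩
    have h1 := SimpleGraph.dist_le p
    have h2 := h.1.dist_triangle (u := x) (v := u) (w := y)
    have h3 : G.dist x u = 1 := SimpleGraph.dist_eq_one_iff_adj.2 hu
    simp at hp
    omega

lemma IsHomTree.dist_cases (h : IsHomTree G q) {x u : V} (y : V) (hu : G.Adj x u) :
    G.dist u y + 1 = G.dist x y ∨ G.dist u y = G.dist x y + 1 := by
  have := h.isTree.dist_eq_dist_add_one_of_adj y hu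
  rw [G.dist_comm (u := y), G.dist_comm (u := y)] at this
  omega

/-- The finite set of neighbours of a vertex of a homogeneous tree. -/
noncomputable def IsHomTree.nbr (h : IsHomTree G q) (x : V) : Finset V :=
  (Set.finite_of_ncard_ne_zero (s := G.neighborSet x) (by rw [h.2.2 x]; omega)).toFinset

lemma IsHomTree.mem_nbr (h : IsHomTree G q) {x u : V} : u ∈ h.nbr x ↔ G.Adj x u := by
  simp [IsHomTree.nbr]

lemma IsHomTree.card_nbr (h : IsHomTree G q) (x : V) : (h.nbr x).card = q + 1 := by
  rw [← h.2.2 x, IsHomTree.nbr, Set.ncard_eq_toFinset_card _ _]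

/-- Summing a radial function around `y` over a set of neighbours of `x ≠ y` which contains the
one neighbour lying on the way to `y`. -/
lemma IsHomTree.sum_subset_nbr (h : IsHomTree G q) (ψ : ℕ → ℝ) {x y : V} (s : Finset V)
    (hs : ∀ u ∈ s, G.Adj x u) {n : ℕ} (hn : G.dist x y = n + 1)
    (hc : ∀ u, G.Adj x u → G.dist u y + 1 = G.dist x y → u ∈ s) :
    ∑ u ∈ s, ψ (G.dist u y) = ψ n + ((s.card : ℝ) - 1) * ψ (n + 2) := by
  classical
  have hxy : x ≠ y := by rintro rfl; simp at hn
  obtain ⟨u, hu, hd⟩ := h.exists_closer hxy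
  have hus := hc u hu hd
  rw [← Finset.add_sum_erase s _ hus]
  have h1 : ∀ v ∈ s.erase u, ψ (G.dist v y) = ψ (n + 2) := by
    intro v hv
    rw [Finset.mem_erase] at hv
    rcases h.dist_cases y (hs v hv.2) with h2 | h2
    · exact absurd (h.closer_unique (hs v hv.2) hu h2 hd) hv.1
    · rw [h2, hn]
  rw [Finset.sum_congr rfl h1, Finset.sum_const, nsmul_eq_mul, Finset.card_erase_of_mem hus,
    Nat.cast_sub (Finset.card_pos.2 ⟨u, hus⟩), show G.dist u y = n by omega]
  simp

/-- The action on radial functions of averaging over the neighbours of a vertex. -/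
noncomputable def radT (q : ℕ) : (ℕ → ℝ) →ₗ[ℝ] (ℕ → ℝ) where
  toFun ψ n := match n with
    | 0 => ψ 1
    | (n+1) => (ψ n + q * ψ (n+2)) / (q+1)
  map_add' f g := by
    funext n
    cases n
    · simp
    · simp
      ring
  map_smul' c f := by
    funext n
    cases n
    · simp
    · simp
      ring

@[simp] lemma radT_zero (ψ : ℕ → ℝ) : radT q ψ 0 = ψ 1 := rfl

@[simp] lemma radT_succ (ψ : ℕ → ℝ) (n : ℕ) :
    radT q ψ (n+1) = (ψ n + q * ψ (n+2)) / (q+1) := rfl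

lemma IsHomTree.sum_nbr (h : IsHomTree G q) (ψ : ℕ → ℝ) (x y : V) :
    ∑ u ∈ h.nbr x, ψ (G.dist u y) = (q+1) * radT q ψ (G.dist x y) := by
  have hq : (q : ℝ) + 1 ≠ 0 := by positivity
  rcases hn : G.dist x y with _ | n
  · obtain rfl := h.1.dist_eq_zero_iff.1 hn
    have : ∀ u ∈ h.nbr x, ψ (G.dist u x) = ψ 1 := fun u hu => by
      rw [SimpleGraph.dist_eq_one_iff_adj.2 (h.mem_nbr.1 hu).symm]
    rw [Finset.sum_congr rfl this]
    simp [h.card_nbr]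
  · rw [h.sum_subset_nbr ψ (h.nbr x) (fun u hu => h.mem_nbr.1 hu) hn
      (fun u hu _ => h.mem_nbr.2 hu), h.card_nbr, radT_succ]
    push_cast
    field_simp
    ring

/-! ### The quadratic form of a radial kernel -/

/-- The bilinear form on finitely supported functions with kernel `(x, y) ↦ ψ (d(x, y))`. -/
noncomputable def radForm (G : SimpleGraph V) (ψ : ℕ → ℝ) :
    (V →₀ ℝ) →ₗ[ℝ] (V →₀ ℝ) →ₗ[ℝ] ℝ :=
  Finsupp.linearCombination ℝ
    (fun x => Finsupp.linearCombination ℝ (fun y => ψ (G.dist x y)))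

@[simp] lemma radForm_single (ψ : ℕ → ℝ) (x y : V) (a b : ℝ) :
    radForm G ψ (Finsupp.single x a) (Finsupp.single y b) = a * (b * ψ (G.dist x y)) := by
  simp [radForm]

lemma radForm_comm (ψ : ℕ → ℝ) (f g : V →₀ ℝ) : radForm G ψ f g = radForm G ψ g f := by
  have : radForm G ψ = (radForm G ψ).flip := by
    ext x y
    simp [G.dist_comm (u := x)]
  exact congrArg (fun B => B f g) this

/-- Real and complex positive definiteness agree for a real symmetric kernel: the imaginary part
of the complex quadratic form cancels and its real part splits. -/
lemma isPDKernel_of_radForm (ψ : ℕ → ℝ) (h : ∀ f, 0 ≤ radForm G ψ f f) :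
    IsPDKernel (fun x y => ((ψ (G.dist x y) : ℝ) : ℂ)) := by
  intro n x z
  have key : ∀ a : Fin n → ℝ, 0 ≤ ∑ i, ∑ j, ψ (G.dist (x i) (x j)) * a i * a j := by
    intro a
    have := h (∑ i, Finsupp.single (x i) (a i))
    simp only [map_sum, LinearMap.sum_apply, radForm_single] at this
    refine this.trans_eq ?_
    rw [Finset.sum_comm]
    exact Finset.sum_congr rfl fun i _ => Finset.sum_congr rfl fun j _ => by ring
  have h1 := key (fun i => (z i).re)
  have h2 := key (fun i => (z i).im)
  rw [Complex.nonneg_iff]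
  constructor
  · refine (add_nonneg h1 h2).trans_eq ?_
    rw [← Finset.sum_add_distrib, Complex.re_sum]
    refine Finset.sum_congr rfl fun i _ => ?_
    rw [← Finset.sum_add_distrib, Complex.re_sum]
    refine Finset.sum_congr rfl fun j _ => ?_
    simp
  · have h3 : (∑ i, ∑ j, ((ψ (G.dist (x i) (x j)) : ℝ) : ℂ) * (starRingEnd ℂ) (z i) * z j).im
        = (∑ i, ∑ j, ψ (G.dist (x i) (x j)) * (z i).re * (z j).im)
          - ∑ i, ∑ j, ψ (G.dist (x i) (x j)) * (z i).im * (z j).re := by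
      rw [← Finset.sum_sub_distrib, Complex.im_sum]
      refine Finset.sum_congr rfl fun i _ => ?_
      rw [← Finset.sum_sub_distrib, Complex.im_sum]
      refine Finset.sum_congr rfl fun j _ => ?_
      simp
      ring
    rw [h3, eq_comm, sub_eq_zero, Finset.sum_comm]
    refine Finset.sum_congr rfl fun i _ => Finset.sum_congr rfl fun j _ => ?_
    rw [G.dist_comm]
    ring

lemma radForm_nonneg_of_isPDKernel (ψ : ℕ → ℝ)
    (h : IsPDKernel (fun x y => ((ψ (G.dist x y) : ℝ) : ℂ))) (f : V →₀ ℝ) :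
    0 ≤ radForm G ψ f f := by
  let e := f.support.equivFin
  have h1 := h f.support.card (fun i => (e.symm i : V)) (fun i => ((f (e.symm i) : ℝ) : ℂ))
  have h2 : radForm G ψ f f = ∑ i, ∑ j,
      ψ (G.dist (e.symm i : V) (e.symm j)) * f (e.symm i) * f (e.symm j) := by
    have : ∀ F : V → ℝ, ∑ i, F (e.symm i) = ∑ x ∈ f.support, F x := fun F => by
      rw [← Finset.sum_coe_sort f.support F]
      exact Equiv.sum_comp e.symm (fun x : f.support => F x)
    rw [this (fun x => ∑ j, ψ (G.dist x (e.symm j)) * f x * f (e.symm j))]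
    simp only [radForm, Finsupp.linearCombination_apply, Finsupp.sum, LinearMap.sum_apply,
      LinearMap.smul_apply, smul_eq_mul]
    refine Finset.sum_congr rfl fun x _ => ?_
    rw [this (fun y => ψ (G.dist x y) * f x * f y), Finset.mul_sum]
    exact Finset.sum_congr rfl fun y _ => by ring
  rw [h2, ← Complex.zero_le_real]
  refine h1.trans_eq ?_
  push_cast
  simp

/-! ### Positive definiteness of the spherical functions -/

/-- `S` is geodesically convex: it contains the first step of the geodesic between any two of its
points. -/
def GeoConvex (G : SimpleGraph V) (S : Set V) : Prop :=
  ∀ x ∈ S, ∀ y ∈ S, ∀ u, G.Adj x u → G.dist u y + 1 = G.dist x y → u ∈ S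

lemma GeoConvex.insert (h : IsHomTree G q) {S : Set V} (hS : GeoConvex G S) {x c : V}
    (hx : x ∈ S) (hc : c ∉ S) (hxc : G.Adj x c) : GeoConvex G (insert c S) := by
  have far : ∀ y ∈ S, G.dist c y = G.dist x y + 1 := fun y hy =>
    (h.dist_cases y hxc).resolve_left fun h1 => hc (hS x hx y hy c hxc h1)
  rintro y (rfl | hy) w (rfl | hw) u hu hd
  · simp at hd
  · refine Or.inr ?_
    rwa [h.closer_unique hu hxc.symm hd (far w hw).symm]
  · rw [G.dist_comm (u := y), far y hy, G.dist_comm (u := x)] at hd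
    by_cases hyx : y = x
    · subst hyx
      left
      exact h.1.dist_eq_zero_iff.1 (by simpa using hd)
    · obtain ⟨v, hv, hvd⟩ := h.exists_closer hyx
      have hvS := hS y hy x hx v hv hvd
      right
      have e1 : G.dist v w + 1 = G.dist y w := by
        rw [G.dist_comm (u := v), G.dist_comm (u := y), far v hvS, far y hy,
          G.dist_comm (u := x), hvd, G.dist_comm]
      have e2 : G.dist u w + 1 = G.dist y w := by
        rw [hd, G.dist_comm (u := y) (v := w), far y hy, G.dist_comm (u := x)]
      rwa [h.closer_unique hu hv e2 e1]
  · exact Or.inr (hS y hy w hw u hu hd)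

/-- One-point extension of a positive semidefinite form: on `S` the new point `c` is represented
by a vector `α` supported in `S`, and `c` is at least as long as `α`. -/
lemma radForm_nonneg_insert (ψ : ℕ → ℝ) {S : Set V} {c : V}
    (hS : ∀ f ∈ Finsupp.supported ℝ ℝ S, 0 ≤ radForm G ψ f f)
    (α : V →₀ ℝ) (hα : α ∈ Finsupp.supported ℝ ℝ S)
    (hrep : ∀ y ∈ S, radForm G ψ α (Finsupp.single y 1) = ψ (G.dist c y))
    (hlen : radForm G ψ α (Finsupp.single c 1) ≤ ψ 0) :
    ∀ f ∈ Finsupp.supported ℝ ℝ (insert c S), 0 ≤ radForm G ψ f f := by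
  intro f hf
  have hrep' : ∀ g ∈ Finsupp.supported ℝ ℝ S,
      radForm G ψ (Finsupp.single c 1) g = radForm G ψ α g := by
    intro g hg
    rw [Finsupp.supported_eq_span_single] at hg
    refine LinearMap.eqOn_span (f := radForm G ψ (Finsupp.single c 1))
      (g := radForm G ψ α) ?_ hg
    rintro _ ⟨y, hy, rfl⟩
    simp [hrep y hy]
  obtain ⟨a, g, hg, rfl⟩ : ∃ a : ℝ, ∃ g ∈ Finsupp.supported ℝ ℝ S,
      f = g + a • Finsupp.single c 1 := by
    rw [Finsupp.supported_eq_span_single, Set.image_insert_eq, Submodule.mem_span_insert,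
      ← Finsupp.supported_eq_span_single] at hf
    obtain ⟨a, g, hg, rfl⟩ := hf
    exact ⟨a, g, hg, add_comm _ _⟩
  have h1 := hS (g + a • α) (Submodule.add_mem _ hg (Submodule.smul_mem _ a hα))
  have e1 := hrep' g hg
  have e2 := hrep' α hα
  have e3 := radForm_comm (G := G) ψ g (Finsupp.single c 1)
  have e4 := radForm_comm (G := G) ψ g α
  have e5 := radForm_comm (G := G) ψ α (Finsupp.single c 1)
  have e6 : radForm G ψ (Finsupp.single c 1) (Finsupp.single c 1) = ψ 0 := by simp
  simp only [map_add, map_smul, LinearMap.add_apply, LinearMap.smul_apply, smul_eq_mul] at h1 ⊢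
  rw [e3, e1, e6]
  rw [e4] at h1
  nlinarith [mul_nonneg (sq_nonneg a) (sub_nonneg.2 hlen)]

lemma treeP_rec (hq : 2 ≤ q) (n : ℕ) (s : ℝ) :
    (q+1) * s * treeP q (n+1) s = q * treeP q (n+2) s + treeP q n s := by
  have : (q : ℝ) ≠ 0 := by positivity
  simp only [treeP]
  field_simp
  ring

/-- The representing vector of a new neighbour `c` of `x ∈ S` is
`((q+1) s δ_x - ∑ δ_u) / (q+1-k)`, where `u` runs over the `k` neighbours of `x` in `S`. -/
lemma treeP_extend (hq : 2 ≤ q) (h : IsHomTree G q) {s : ℝ} (hs : s ∈ Set.Icc (-1 : ℝ) 1)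
    {S : Set V} (hS : GeoConvex G S)
    (hpos : ∀ f ∈ Finsupp.supported ℝ ℝ S, 0 ≤ radForm G (fun n => treeP q n s) f f)
    {x c : V} (hx : x ∈ S) (hc : c ∉ S) (hxc : G.Adj x c) :
    ∀ f ∈ Finsupp.supported ℝ ℝ (insert c S),
      0 ≤ radForm G (fun n => treeP q n s) f f := by
  classical
  set ψ : ℕ → ℝ := fun n => treeP q n s with hψ
  set N : Finset V := (h.nbr x).filter (· ∈ S) with hN
  have hNadj : ∀ u ∈ N, G.Adj x u := fun u hu => h.mem_nbr.1 (Finset.mem_filter.1 hu).1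
  have hNS : ∀ u ∈ N, u ∈ S := fun u hu => (Finset.mem_filter.1 hu).2
  have far : ∀ y ∈ S, G.dist c y = G.dist x y + 1 := fun y hy =>
    (h.dist_cases y hxc).resolve_left fun h1 => hc (hS x hx y hy c hxc h1)
  have hcard : N.card ≤ q := by
    have : N ⊂ h.nbr x := by
      rw [Finset.ssubset_iff_of_subset (Finset.filter_subset _ _)]
      exact ⟨c, h.mem_nbr.2 hxc, fun h1 => hc (hNS c h1)⟩
    have := Finset.card_lt_card this
    rw [h.card_nbr] at this
    omega
  set k : ℝ := (N.card : ℝ) with hk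
  have hkq : k ≤ q := by
    rw [hk]
    exact_mod_cast hcard
  have hq0 : (0 : ℝ) < q := by positivity
  have hden : 0 < (q : ℝ) + 1 - k := by linarith
  let α : V →₀ ℝ := ((q : ℝ) + 1 - k)⁻¹ •
    (((q + 1) * s) • Finsupp.single x 1 - ∑ u ∈ N, Finsupp.single u 1)
  have hαy : ∀ y, radForm G ψ α (Finsupp.single y 1)
      = ((q : ℝ) + 1 - k)⁻¹ * ((q + 1) * s * ψ (G.dist x y) - ∑ u ∈ N, ψ (G.dist u y)) := by
    intro y
    simp only [α, map_smul, map_sub, map_sum, LinearMap.smul_apply, LinearMap.sub_apply,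
      LinearMap.sum_apply, radForm_single, smul_eq_mul, one_mul]
  have ψ0 : ψ 0 = 1 := rfl
  have ψ1 : ψ 1 = s := rfl
  have ψr : ∀ n, (q + 1) * s * ψ (n+1) = q * ψ (n+2) + ψ n := fun n => treeP_rec hq n s
  refine radForm_nonneg_insert ψ hpos α ?_ ?_ ?_
  · refine Submodule.smul_mem _ _ (Submodule.sub_mem _ (Submodule.smul_mem _ _ ?_)
      (Submodule.sum_mem _ fun u hu => ?_))
    · exact Finsupp.single_mem_supported ℝ 1 hx
    · exact Finsupp.single_mem_supported ℝ 1 (hNS u hu)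
  · intro y hy
    rw [hαy, far y hy, inv_mul_eq_iff_eq_mul₀ hden.ne']
    rcases hn : G.dist x y with _ | n
    · obtain rfl := h.1.dist_eq_zero_iff.1 hn
      have : ∀ u ∈ N, ψ (G.dist u x) = s := fun u hu => by
        rw [SimpleGraph.dist_eq_one_iff_adj.2 (hNadj u hu).symm, ψ1]
      rw [Finset.sum_congr rfl this, Finset.sum_const, nsmul_eq_mul, ← hk, ψ0, zero_add, ψ1]
      ring
    · rw [h.sum_subset_nbr ψ N hNadj hn ?_, ψr, ← hk]
      · ring
      · intro u hu hd
        exact Finset.mem_filter.2 ⟨h.mem_nbr.2 hu, hS x hx y hy u hu hd⟩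
  · have h1 : ∀ u ∈ N, ψ (G.dist u c) = ψ 2 := fun u hu => by
      rw [G.dist_comm, far u (hNS u hu), SimpleGraph.dist_eq_one_iff_adj.2 (hNadj u hu)]
    rw [hαy, Finset.sum_congr rfl h1, Finset.sum_const, nsmul_eq_mul, ← hk,
      SimpleGraph.dist_eq_one_iff_adj.2 hxc, inv_mul_le_iff₀ hden, ψ0, ψ1]
    have h2 := ψr 0
    simp only [zero_add, ψ0, ψ1] at h2
    have h3 : ψ 2 = ((q + 1) * s * s - 1) / q := by
      field_simp
      linarith
    have h4 : s * s ≤ 1 := by nlinarith [hs.1, hs.2]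
    have h5 : ((q : ℝ) + 1 - k) * 1 - ((q + 1) * s * s - k * ψ 2)
        = (q + 1) * (1 - s * s) * (q - k) / q := by
      rw [h3]
      field_simp
      ring
    have h6 : 0 ≤ (q + 1) * (1 - s * s) * (q - k) / q :=
      div_nonneg (mul_nonneg (mul_nonneg (by positivity) (by linarith)) (by linarith)) hq0.le
    linarith

lemma treeP_radForm_nonneg (hq : 2 ≤ q) (h : IsHomTree G q) {s : ℝ}
    (hs : s ∈ Set.Icc (-1 : ℝ) 1) (f : V →₀ ℝ) :
    0 ≤ radForm G (fun n => treeP q n s) f f := by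
  classical
  let Good : Set V → Prop := fun S => GeoConvex G S ∧
    ∀ f ∈ Finsupp.supported ℝ ℝ S, 0 ≤ radForm G (fun n => treeP q n s) f f
  have hext : ∀ S, Good S → ∀ x ∈ S, ∀ c, G.Adj x c → Good (insert c S) := by
    intro S hS x hx c hxc
    by_cases hc : c ∈ S
    · rwa [Set.insert_eq_of_mem hc]
    · exact ⟨hS.1.insert h hx hc hxc, treeP_extend hq h hs hS.1 hS.2 hx hc hxc⟩
  have hwalk : ∀ (x v : V) (p : G.Walk x v) (S : Set V), Good S → x ∈ S →
      ∃ S', S ⊆ S' ∧ v ∈ S' ∧ Good S' := by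
    intro x v p
    induction p with
    | nil => exact fun S hS hx => ⟨S, subset_rfl, hx, hS⟩
    | @cons x u v hu p ih =>
      intro S hS hx
      obtain ⟨S', h1, h2, h3⟩ := ih (insert u S) (hext S hS x hx u hu) (Set.mem_insert _ _)
      exact ⟨S', (Set.subset_insert _ _).trans h1, h2, h3⟩
  obtain ⟨o⟩ := h.1.nonempty
  have h0 : Good {o} := by
    refine ⟨?_, fun f hf => ?_⟩
    · rintro x rfl y rfl u hu hd
      simp at hd
    · have hf' : f = Finsupp.single o (f o) := by
        rw [Finsupp.mem_supported] at hf
        exact Finsupp.support_subset_singleton.1 (by exact_mod_cast hf)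
      rw [hf', radForm_single]
      simp only [SimpleGraph.dist_self, treeP, mul_one]
      exact mul_self_nonneg _
  have hfin : ∀ F : Finset V, ∃ S : Set V, o ∈ S ∧ (F : Set V) ⊆ S ∧ Good S := by
    intro F
    induction F using Finset.induction_on with
    | empty => exact ⟨{o}, rfl, by simp, h0⟩
    | insert v F _ ih =>
      obtain ⟨S, h1, h2, h3⟩ := ih
      obtain ⟨p⟩ := h.1.preconnected o v
      obtain ⟨S', h4, h5, h6⟩ := hwalk o v p S h3 h1
      refine ⟨S', h4 h1, ?_, h6⟩
      rw [Finset.coe_insert, Set.insert_subset_iff]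
      exact ⟨h5, h2.trans h4⟩
  obtain ⟨S, -, h2, h3⟩ := hfin f.support
  exact h3.2 f h2

end Tree

/-! ### The moment problem on `[-1, 1]` -/

section Moment

open Polynomial CompactlySupported

/-- The monomial `X ^ k` has Bernstein coefficients `C(j,k) / C(n,k)` in degree `n`. -/
lemma sum_choose_bernstein (n k : ℕ) :
    ∑ j ∈ Finset.range (n+1), (j.choose k : ℝ) • bernsteinPolynomial ℝ n j
      = (n.choose k : ℝ) • (X : ℝ[X]) ^ k := by
  by_cases hk : n < k
  · rw [Nat.choose_eq_zero_of_lt hk, Finset.sum_eq_zero]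
    · simp
    · intro j hj
      rw [Finset.mem_range] at hj
      rw [Nat.choose_eq_zero_of_lt (by omega)]
      simp
  push Not at hk
  obtain ⟨m, rfl⟩ := Nat.exists_eq_add_of_le hk
  rw [show k + m + 1 = k + (m + 1) by ring, Finset.sum_range_add, Finset.sum_eq_zero, zero_add]
  · have h1 := add_pow (X : ℝ[X]) (1 - X) m
    rw [add_sub_cancel, one_pow] at h1
    have h2 : ∀ i ∈ Finset.range (m+1),
        ((k+i).choose k : ℝ) • bernsteinPolynomial ℝ (k+m) (k+i)
          = ((k+m).choose k : ℝ) • (X : ℝ[X]) ^ k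
            * (X ^ i * (1 - X) ^ (m - i) * (m.choose i : ℝ[X])) := by
      intro i _
      have h3 := Nat.choose_mul (n := k+m) (k := k+i) (s := k) (by omega)
      rw [Nat.add_sub_cancel_left, Nat.add_sub_cancel_left] at h3
      have h4 : ((k+m).choose (k+i) : ℝ[X]) * ((k+i).choose k : ℝ[X])
          = ((k+m).choose k : ℝ[X]) * (m.choose i : ℝ[X]) := by exact_mod_cast h3
      rw [bernsteinPolynomial, Nat.add_sub_add_left, smul_eq_C_mul, smul_eq_C_mul]
      simp only [map_natCast]
      rw [pow_add]
      linear_combination (X ^ k * X ^ i * (1 - X) ^ (m - i)) * h4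
    rw [Finset.sum_congr rfl h2, ← Finset.mul_sum, ← h1, mul_one]
  · intro j hj
    rw [Finset.mem_range] at hj
    rw [Nat.choose_eq_zero_of_lt hj]
    simp

/-- The Bernstein coefficients of `X ^ k` approach the values `(j/n) ^ k`. -/
lemma choose_ratio_approx (k n : ℕ) (hn : 2 * k ≤ n) (hn0 : 0 < n) (j : ℕ) (hj : j ≤ n) :
    |(j.choose k : ℝ) / (n.choose k : ℝ) - ((j : ℝ) / n) ^ k| ≤ 2 * k ^ 2 / n := by
  have hnr : (0 : ℝ) < n := by exact_mod_cast hn0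
  have hjr : (j : ℝ) ≤ n := by exact_mod_cast hj
  induction k with
  | zero => simp
  | succ k ih =>
    have ih := ih (by omega)
    have hnk : (2 : ℝ) * (k + 1) ≤ n := by exact_mod_cast hn
    have hd : (0 : ℝ) < n - k := by linarith
    have hrec : ∀ i : ℕ, (i.choose (k+1) : ℝ) = i.choose k * (i - k) / (k + 1) := by
      intro i
      rw [eq_div_iff (by positivity)]
      rcases le_or_gt k i with h | h
      · rw [← Nat.cast_sub h]
        exact_mod_cast Nat.choose_succ_right_eq i k
      · rw [Nat.choose_eq_zero_of_lt h, Nat.choose_eq_zero_of_lt (by omega)]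
        simp
    have hc : (0 : ℝ) < n.choose k := by exact_mod_cast Nat.choose_pos (by omega)
    set r : ℝ := (j.choose k : ℝ) / (n.choose k : ℝ) with hr
    set t : ℝ := (j : ℝ) / n with ht
    have ht0 : 0 ≤ t := by positivity
    have ht1 : t ≤ 1 := (div_le_one hnr).2 hjr
    have hr0 : 0 ≤ r := by positivity
    have hr1 : r ≤ 1 := (div_le_one hc).2 (by exact_mod_cast Nat.choose_le_choose k hj)
    have e1 : (j.choose (k+1) : ℝ) / (n.choose (k+1) : ℝ) = r * ((j - k) / (n - k)) := by
      rw [hrec, hrec, hr]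
      field_simp
    have e2 : ((j : ℝ) - k) / (n - k) - t = - (k * (1 - t) / (n - k)) := by
      rw [ht]
      field_simp
      ring
    have e3 : k * (1 - t) / (n - k) ≤ 2 * k / n := by
      rw [div_le_div_iff₀ hd hnr]
      have : (0 : ℝ) ≤ k := by positivity
      nlinarith [mul_nonneg this ht0, mul_nonneg (mul_nonneg this ht0) hnr.le]
    have e4 : 0 ≤ k * (1 - t) / (n - k) :=
      div_nonneg (mul_nonneg (by positivity) (by linarith)) hd.le
    rw [e1, show r * ((j - k) / (n - k)) - t ^ (k+1)
      = r * (((j : ℝ) - k) / (n - k) - t) + t * (r - t ^ k) by ring, e2]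
    refine (abs_add_le _ _).trans ?_
    rw [abs_mul, abs_mul, abs_neg, abs_of_nonneg e4, abs_of_nonneg hr0, abs_of_nonneg ht0]
    have f1 : r * (k * (1 - t) / (n - k)) ≤ 2 * k / n :=
      (mul_le_of_le_one_left e4 hr1).trans e3
    have f2 : t * |r - t ^ k| ≤ 2 * k ^ 2 / n :=
      (mul_le_of_le_one_left (abs_nonneg _) ht1).trans ih
    refine (add_le_add f1 f2).trans ?_
    rw [← add_div]
    gcongr
    push_cast
    nlinarith [show (0:ℝ) ≤ k by positivity]

/-- A functional nonnegative on the Bernstein polynomials is nonnegative on the polynomials that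
are nonnegative on `[0, 1]`: the Bernstein coefficients of `p` in degree `n` differ from the
values `p (j/n)` by `O(1/n)`. -/
lemma nonneg_of_bernstein (L : ℝ[X] →ₗ[ℝ] ℝ)
    (hB : ∀ n j, 0 ≤ L (bernsteinPolynomial ℝ n j)) (p : ℝ[X])
    (hp : ∀ t ∈ Set.Icc (0 : ℝ) 1, 0 ≤ p.eval t) : 0 ≤ L p := by
  set d := p.natDegree
  set K : ℝ := ∑ k ∈ Finset.range (d+1), |p.coeff k| * (2 * k ^ 2) with hK
  have key : ∀ n : ℕ, 2 * d + 1 ≤ n → -(K / n) * L 1 ≤ L p := by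
    intro n hn
    have hnr : (0 : ℝ) < n := by exact_mod_cast (by omega : 0 < n)
    let c : ℕ → ℝ := fun j =>
      ∑ k ∈ Finset.range (d+1), p.coeff k * ((j.choose k : ℝ) / (n.choose k : ℝ))
    have hpc : p = ∑ j ∈ Finset.range (n+1), c j • bernsteinPolynomial ℝ n j := by
      simp only [c, Finset.sum_smul]
      rw [Finset.sum_comm]
      conv_lhs => rw [p.as_sum_range_C_mul_X_pow]
      refine Finset.sum_congr rfl fun k hk => ?_
      rw [Finset.mem_range] at hk
      have hc : (n.choose k : ℝ) ≠ 0 := by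
        exact_mod_cast (Nat.choose_pos (by omega : k ≤ n)).ne'
      have h1 := sum_choose_bernstein n k
      have h2 : (X : ℝ[X]) ^ k = (n.choose k : ℝ)⁻¹ • ∑ j ∈ Finset.range (n+1),
          (j.choose k : ℝ) • bernsteinPolynomial ℝ n j := by
        rw [h1, smul_smul, inv_mul_cancel₀ hc, one_smul]
      rw [← smul_eq_C_mul, h2, Finset.smul_sum, Finset.smul_sum]
      refine Finset.sum_congr rfl fun j _ => ?_
      rw [smul_smul, smul_smul]
      congr 1
      ring
    have hcj : ∀ j ∈ Finset.range (n+1), -(K / n) ≤ c j := by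
      intro j hj
      rw [Finset.mem_range] at hj
      have hjn : j ≤ n := by omega
      have h1 := hp ((j : ℝ) / n) ⟨by positivity, (div_le_one hnr).2 (by exact_mod_cast hjn)⟩
      rw [eval_eq_sum_range] at h1
      have h2 : |c j - ∑ k ∈ Finset.range (d+1), p.coeff k * ((j : ℝ) / n) ^ k| ≤ K / n := by
        rw [hK, Finset.sum_div]
        simp only [c]
        rw [← Finset.sum_sub_distrib]
        refine (Finset.abs_sum_le_sum_abs _ _).trans (Finset.sum_le_sum fun k hk => ?_)
        rw [Finset.mem_range] at hk
        rw [← mul_sub, abs_mul, mul_div_assoc]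
        exact mul_le_mul_of_nonneg_left
          (choose_ratio_approx k n (by omega) (by omega) j hjn) (abs_nonneg _)
      linarith [(abs_le.1 h2).1]
    have h1 : (1 : ℝ[X]) = ∑ j ∈ Finset.range (n+1), bernsteinPolynomial ℝ n j :=
      (bernsteinPolynomial.sum ℝ n).symm
    rw [h1, map_sum, Finset.mul_sum]
    conv_rhs => rw [hpc, map_sum]
    refine Finset.sum_le_sum fun j hj => ?_
    rw [map_smul, smul_eq_mul]
    exact mul_le_mul_of_nonneg_right (hcj j hj) (hB n j)
  have hlim : Tendsto (fun n : ℕ => -(K / n) * L 1) atTop (nhds (-0 * L 1)) :=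
    ((tendsto_const_div_atTop_nhds_zero_nat K).neg).mul_const _
  rw [neg_zero, zero_mul] at hlim
  exact le_of_tendsto hlim (eventually_atTop.2 ⟨_, key⟩)

/-- A positive functional with bounded moments satisfies `|L (X r²)| ≤ L (r²)`: otherwise
iterating the Cauchy–Schwarz inequality makes `L (X ^ (2 ^ n) r²)` blow up. -/
lemma abs_map_X_mul_sq_le (L : ℝ[X] →ₗ[ℝ] ℝ) (hsq : ∀ p, 0 ≤ L (p * p))
    (C : ℝ) (hC : ∀ m, |L (X ^ m)| ≤ C) (r : ℝ[X]) : |L (X * (r * r))| ≤ L (r * r) := by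
  have hbd : ∀ p : ℝ[X], ∃ D, ∀ k, |L (X ^ k * p)| ≤ D := by
    intro p
    induction p using Polynomial.induction_on' with
    | add p₁ p₂ h₁ h₂ =>
      obtain ⟨D₁, h₁⟩ := h₁
      obtain ⟨D₂, h₂⟩ := h₂
      refine ⟨D₁ + D₂, fun k => ?_⟩
      rw [mul_add, map_add]
      exact (abs_add_le _ _).trans (add_le_add (h₁ k) (h₂ k))
    | monomial n a =>
      refine ⟨|a| * C, fun k => ?_⟩
      rw [← smul_X_eq_monomial, mul_smul_comm, ← pow_add, map_smul, smul_eq_mul, abs_mul]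
      exact mul_le_mul_of_nonneg_left (hC _) (abs_nonneg a)
  obtain ⟨D, hD⟩ := hbd (r * r)
  set m : ℕ → ℝ := fun k => L (X ^ k * (r * r)) with hm
  have hm0 : L (r * r) = m 0 := by simp [hm]
  have hm1 : L (X * (r * r)) = m 1 := by simp [hm]
  have hpos : 0 ≤ m 0 := hm0 ▸ hsq r
  have hcs : ∀ k, m k ^ 2 ≤ m 0 * m (2 * k) := by
    intro k
    have h1 : ∀ t : ℝ, 0 ≤ m 0 * (t * t) + (2 * m k) * t + m (2 * k) := by
      intro t
      have h2 := hsq (t • r + X ^ k * r)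
      have h3 : (t • r + X ^ k * r) * (t • r + X ^ k * r)
          = (t * t) • (X ^ 0 * (r * r)) + (2 * t) • (X ^ k * (r * r))
            + X ^ (2 * k) * (r * r) := by
        simp only [smul_eq_C_mul, map_mul, C_ofNat]
        ring
      rw [h3, map_add, map_add, map_smul, map_smul, smul_eq_mul, smul_eq_mul] at h2
      simp only [hm]
      linarith
    have h2 := discrim_le_zero h1
    rw [discrim] at h2
    nlinarith
  rw [hm0, hm1]
  by_contra! hlt
  have hm0pos : 0 < m 0 := by
    refine hpos.lt_of_ne fun h0 => ?_
    have h1 := hcs 1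
    rw [← h0, zero_mul] at h1
    have h2 : m 1 = 0 := by nlinarith
    rw [h2, ← h0] at hlt
    simp at hlt
  set t := |m 1| / m 0 with ht
  have ht1 : 1 < t := (one_lt_div hm0pos).2 hlt
  have hgrow : ∀ n : ℕ, m 0 * t ^ (2 ^ n) ≤ |m (2 ^ n)| := by
    intro n
    induction n with
    | zero =>
      rw [pow_zero, pow_one, ht]
      field_simp
      exact le_rfl
    | succ n ih =>
      have h1 := hcs (2 ^ n)
      rw [← pow_succ'] at h1
      have h2 : (m 0 * t ^ (2 ^ n)) ^ 2 ≤ |m (2 ^ n)| ^ 2 :=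
        pow_le_pow_left₀ (by positivity) ih 2
      rw [sq_abs] at h2
      have h3 : m 0 * (m 0 * t ^ (2 ^ (n+1))) ≤ m 0 * m (2 ^ (n+1)) := by
        refine le_trans (le_of_eq ?_) (h2.trans h1)
        rw [pow_succ 2 n, pow_mul]
        ring
      exact (le_of_mul_le_mul_left h3 hm0pos).trans (le_abs_self _)
  obtain ⟨N, hN⟩ := pow_unbounded_of_one_lt (D / m 0) ht1
  have h1 : t ^ N ≤ t ^ (2 ^ N) := pow_le_pow_right₀ ht1.le Nat.lt_two_pow_self.le
  have h2 := (hgrow N).trans (hD (2 ^ N))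
  rw [div_lt_iff₀ hm0pos] at hN
  nlinarith

lemma nonneg_of_moments (L : ℝ[X] →ₗ[ℝ] ℝ) (hsq : ∀ p, 0 ≤ L (p * p))
    (M : ℝ) (hM : ∀ m, |L (X ^ m)| ≤ M) (p : ℝ[X])
    (hp : ∀ t ∈ Set.Icc (-1 : ℝ) 1, 0 ≤ p.eval t) : 0 ≤ L p := by
  have hX := abs_map_X_mul_sq_le L hsq M hM
  have hplus : ∀ r : ℝ[X], 0 ≤ L ((1 + X) * (r * r)) := fun r => by
    rw [add_mul, one_mul, map_add]
    linarith [(abs_le.1 (hX r)).1]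
  have hminus : ∀ r : ℝ[X], 0 ≤ L ((1 - X) * (r * r)) := fun r => by
    rw [sub_mul, one_mul, map_sub]
    linarith [(abs_le.1 (hX r)).2]
  -- `2(1 - X²) = (1+X)²(1-X) + (1-X)²(1+X)`
  have hprod : ∀ r : ℝ[X], 0 ≤ L ((1 + X) * (1 - X) * (r * r)) := fun r => by
    have h1 := add_nonneg (hplus ((1 - X) * r)) (hminus ((1 + X) * r))
    rw [← map_add] at h1
    have h2 : (1 + X) * ((1 - X) * r * ((1 - X) * r)) + (1 - X) * ((1 + X) * r * ((1 + X) * r))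
        = (2 : ℝ) • ((1 + X) * (1 - X) * (r * r)) := by
      rw [smul_eq_C_mul, C_ofNat]
      ring
    rw [h2, map_smul, smul_eq_mul] at h1
    linarith
  have hall : ∀ a b : ℕ, 0 ≤ L ((1 + X) ^ a * (1 - X) ^ b) := by
    intro a b
    obtain ⟨a', rfl | rfl⟩ := Nat.even_or_odd' a <;> obtain ⟨b', rfl | rfl⟩ := Nat.even_or_odd' b
    · convert hsq ((1 + X) ^ a' * (1 - X) ^ b') using 2
      ring
    · convert hminus ((1 + X) ^ a' * (1 - X) ^ b') using 2
      ring
    · convert hplus ((1 + X) ^ a' * (1 - X) ^ b') using 2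
      ring
    · convert hprod ((1 + X) ^ a' * (1 - X) ^ b') using 2
      ring
  -- transport to `[0, 1]` by the substitution `t = (1 + s) / 2`
  let σ : ℝ[X] := C (1/2) * (1 + X)
  let τ : ℝ[X] := C 2 * X - 1
  let L' : ℝ[X] →ₗ[ℝ] ℝ := L ∘ₗ (aeval σ : ℝ[X] →ₐ[ℝ] ℝ[X]).toLinearMap
  have h1 : ∀ n j, 0 ≤ L' (bernsteinPolynomial ℝ n j) := by
    intro n j
    have h2 : aeval σ (bernsteinPolynomial ℝ n j)
        = ((n.choose j : ℝ) * (1/2) ^ j * (1/2) ^ (n-j)) •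
          ((1 + X) ^ j * (1 - X) ^ (n-j)) := by
      have h3 : 1 - σ = C (1/2) * (1 - X) := by
        have h4 : (C (1/2) : ℝ[X]) * 2 = 1 := by
          rw [← C_ofNat, ← C_mul]
          norm_num
        simp only [σ]
        linear_combination -h4
      rw [bernsteinPolynomial]
      simp only [map_mul, map_pow, map_sub, map_one, aeval_X, map_natCast]
      rw [h3, smul_eq_C_mul]
      simp only [σ, mul_pow, map_mul, map_pow, map_natCast]
      ring
    change 0 ≤ L (aeval σ (bernsteinPolynomial ℝ n j))
    rw [h2, map_smul, smul_eq_mul]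
    exact mul_nonneg (by positivity) (hall _ _)
  have h2 := nonneg_of_bernstein L' h1 (p.comp τ) (fun t ht => by
    rw [eval_comp]
    apply hp
    simp only [τ, eval_sub, eval_mul, eval_C, eval_X, eval_one]
    constructor <;> linarith [ht.1, ht.2])
  have h3 : L' (p.comp τ) = L p := by
    change L (aeval σ (p.comp τ)) = L p
    rw [← comp_eq_aeval, comp_assoc]
    have h5 : τ.comp σ = X := by
      have h4 : (C 2 : ℝ[X]) * C (1/2) = 1 := by
        rw [← C_mul]
        norm_num
      simp only [τ, σ, sub_comp, mul_comp, C_comp, X_comp, one_comp]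
      linear_combination (1 + X) * h4
    rw [h5, comp_X]
  rwa [h3] at h2

/-- Solution of the moment problem on `[-1, 1]`: extend the functional to all continuous functions
by the M. Riesz extension theorem and represent it by the Riesz–Markov–Kakutani theorem. -/
lemma exists_measure_of_moments (L : ℝ[X] →ₗ[ℝ] ℝ) (hsq : ∀ p, 0 ≤ L (p * p))
    (C : ℝ) (hC : ∀ m, |L (X ^ m)| ≤ C) :
    ∃ μ : Measure (Set.Icc (-1 : ℝ) 1), IsFiniteMeasure μ ∧
      ∀ p : ℝ[X], L p = ∫ s, p.eval (s : ℝ) ∂μ := by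
  let I := Set.Icc (-1 : ℝ) 1
  let ι : ℝ[X] →ₗ[ℝ] C(I, ℝ) := (toContinuousMapOnAlgHom I).toLinearMap
  have hι : ∀ p s, ι p s = p.eval (s : ℝ) := fun p s => rfl
  have hinj : Function.Injective ι := by
    intro p r hpr
    refine Polynomial.eq_of_infinite_eval_eq p r
      ((Set.Icc_infinite (by norm_num : (-1 : ℝ) < 1)).mono fun s hs => ?_)
    exact congrArg (fun f : C(I, ℝ) => f ⟨s, hs⟩) hpr
  let e := LinearEquiv.ofInjective ι hinj
  let f : C(I, ℝ) →ₗ.[ℝ] ℝ := ⟨LinearMap.range ι, L ∘ₗ e.symm.toLinearMap⟩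
  have hf : ∀ p, f (e p) = L p := fun p => by
    change L (e.symm (e p)) = L p
    rw [e.symm_apply_apply]
  let P : PointedCone ℝ C(I, ℝ) := PointedCone.positive ℝ C(I, ℝ)
  obtain ⟨g, hg, hgpos⟩ := riesz_extension P f (by
      intro x hx
      obtain ⟨p, rfl⟩ := e.surjective x
      rw [hf]
      rw [PointedCone.mem_positive] at hx
      exact nonneg_of_moments L hsq C hC p fun t ht => hx ⟨t, ht⟩) (by
      intro y
      refine ⟨e (Polynomial.C ‖y‖), ?_⟩
      rw [PointedCone.mem_positive]
      intro s
      have h1 : (e (Polynomial.C ‖y‖) : C(I, ℝ)) s = ‖y‖ := by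
        change ι (Polynomial.C ‖y‖) s = _
        rw [hι, eval_C]
      change (0 : ℝ) ≤ (e (Polynomial.C ‖y‖) : C(I, ℝ)) s + y s
      rw [h1]
      have := (abs_le.1 (y.norm_coe_le_norm s)).1
      linarith)
  have hgp : ∀ p, g (ι p) = L p := fun p => by
    rw [← hf p, ← hg (e p)]
    rfl
  let Λ₀ : C_c(I, ℝ) →ₗ[ℝ] ℝ :=
    { toFun := fun f => g f.toContinuousMap
      map_add' := fun a b => g.map_add a.toContinuousMap b.toContinuousMap
      map_smul' := fun c a => g.map_smul c a.toContinuousMap }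
  let Λ : C_c(I, ℝ) →ₚ[ℝ] ℝ := PositiveLinearMap.mk₀ Λ₀ (fun a ha => hgpos _ (by
    rw [PointedCone.mem_positive]
    exact fun s => ha s))
  have hfin : IsFiniteMeasure (RealRMK.rieszMeasure Λ) := by
    infer_instance
  refine ⟨RealRMK.rieszMeasure Λ, hfin, fun p => ?_⟩
  rw [← hgp p]
  exact (RealRMK.integral_rieszMeasure Λ
    (CompactlySupportedContinuousMap.continuousMapEquiv (ι p))).symm

end Moment

/-! ### Existence of the homogeneous tree -/

/-- Words in `q + 1` letters without equal consecutive letters. -/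
abbrev RedWord (q : ℕ) : Type := {l : List (Fin (q+1)) // l.IsChain (· ≠ ·)}

/-- The tree on reduced words: `a :: l` is joined to `l`. It is the Cayley graph of the free
product of `q + 1` copies of `ℤ/2`. -/
def wordTree (q : ℕ) : SimpleGraph (RedWord q) where
  Adj l l' := ∃ a, l'.1 = a :: l.1 ∨ l.1 = a :: l'.1
  symm := ⟨fun _ _ ⟨a, h⟩ => ⟨a, h.symm⟩⟩
  loopless := ⟨fun l ⟨a, h⟩ => by
    have := congrArg List.length (h.elim id id)
    simp at this⟩

/-- Multiplication of a reduced word by a generator. -/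
def wordStep (q : ℕ) (l : RedWord q) (a : Fin (q+1)) : RedWord q :=
  if h : l.1.head? = some a then ⟨l.1.tail, l.2.tail⟩
  else ⟨a :: l.1, by
    rw [List.isChain_cons]
    refine ⟨fun y hy hay => h ?_, l.2⟩
    rw [hay]
    exact hy⟩

lemma wordStep_spec (q : ℕ) (l : RedWord q) (a : Fin (q+1)) :
    (wordStep q l a).1 = a :: l.1 ∨ l.1 = a :: (wordStep q l a).1 := by
  unfold wordStep
  split_ifs with h
  · right
    obtain ⟨_ | ⟨b, t⟩, hl⟩ := l
    · simp at h
    · simpa using h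
  · exact Or.inl rfl

lemma wordStep_eq (q : ℕ) (l l' : RedWord q) (a : Fin (q+1))
    (h : l'.1 = a :: l.1 ∨ l.1 = a :: l'.1) : wordStep q l a = l' := by
  obtain ⟨l, hl⟩ := l
  obtain ⟨l', hl'⟩ := l'
  rcases h with h | h
  · dsimp at h
    subst h
    have : l.head? ≠ some a := fun h1 => (List.isChain_cons.1 hl').1 a h1 rfl
    simp [wordStep, this]
  · dsimp at h
    subst h
    simp [wordStep]

lemma wordStep_injective (q : ℕ) (l : RedWord q) : Function.Injective (wordStep q l) := by
  intro a b hab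
  have h1 := wordStep_spec q l a
  have h2 := wordStep_spec q l b
  rw [hab] at h1
  rcases h1 with h1 | h1 <;> rcases h2 with h2 | h2
  · exact (List.cons.inj (h1.symm.trans h2)).1
  · have := congrArg List.length h1
    have := congrArg List.length h2
    simp at *
    omega
  · have := congrArg List.length h1
    have := congrArg List.length h2
    simp at *
    omega
  · exact (List.cons.inj (h1.symm.trans h2)).1

/-- Deleting the edge between `v` and `a :: v` separates its end points, since having the suffix
`a :: v` is then invariant along edges. -/
lemma wordTree_isBridge (q : ℕ) (v w : RedWord q) (a : Fin (q+1)) (h : w.1 = a :: v.1) :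
    (wordTree q).IsBridge s(w, v) := by
  rw [SimpleGraph.isBridge_iff]
  rintro ⟨p⟩
  have key : ∀ (x y : RedWord q), ((wordTree q) \ SimpleGraph.fromEdgeSet {s(w, v)}).Walk x y →
      w.1 <:+ x.1 → w.1 <:+ y.1 := by
    intro x y p
    induction p with
    | nil => exact id
    | @cons x y z hxy p ih =>
      intro hx
      apply ih
      rw [SimpleGraph.sdiff_adj] at hxy
      obtain ⟨⟨b, hb | hb⟩, hne⟩ := hxy
      · rw [hb]
        exact hx.trans (List.suffix_cons b x.1)
      · rw [hb, List.suffix_cons_iff] at hx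
        refine hx.resolve_left fun h1 => hne ?_
        have e1 : w = x := Subtype.ext (h1.trans hb.symm)
        have e2 : v = y := Subtype.ext (List.cons.inj (h.symm.trans h1)).2
        subst e1 e2
        simp only [SimpleGraph.fromEdgeSet_adj, Set.mem_singleton_iff, true_and]
        intro e3
        have := congrArg (fun l : RedWord q => l.1.length) e3
        rw [h] at this
        simp at this
  have := (key w v p List.suffix_rfl).length_le
  rw [h] at this
  simp at this

lemma wordTree_isHomTree (q : ℕ) : IsHomTree (wordTree q) q := by
  refine ⟨?_, ?_, fun l => ?_⟩
  · have h0 : ∀ (n : ℕ) (l : RedWord q), l.1.length = n →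
        (wordTree q).Reachable l ⟨[], List.isChain_nil⟩ := by
      intro n
      induction n with
      | zero =>
        rintro ⟨l, hl⟩ hn
        obtain rfl := List.length_eq_zero_iff.1 hn
        exact SimpleGraph.Reachable.refl _
      | succ n ih =>
        rintro ⟨_ | ⟨a, l⟩, hl⟩ hn
        · simp at hn
        · have hadj : (wordTree q).Adj ⟨a :: l, hl⟩ ⟨l, hl.tail⟩ := ⟨a, Or.inr rfl⟩
          exact hadj.reachable.trans (ih _ (by simpa using hn))
    have : Nonempty (RedWord q) := ⟨⟨[], List.isChain_nil⟩⟩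
    exact ⟨fun u v => (h0 _ u rfl).trans (h0 _ v rfl).symm⟩
  · rw [SimpleGraph.isAcyclic_iff_forall_adj_isBridge]
    rintro v w ⟨a, h | h⟩
    · rw [Sym2.eq_swap]
      exact wordTree_isBridge q v w a h
    · exact wordTree_isBridge q w v a h
  · have : (wordTree q).neighborSet l = Set.range (wordStep q l) := by
      ext l'
      constructor
      · rintro ⟨a, h⟩
        exact ⟨a, wordStep_eq q l l' a h⟩
      · rintro ⟨a, rfl⟩
        exact ⟨a, wordStep_spec q l a⟩
    rw [this, ← Set.image_univ, Set.ncard_image_of_injective _ (wordStep_injective q l),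
      Set.ncard_univ, Nat.card_eq_fintype_card, Fintype.card_fin]

/-! ### The functional of a positive definite radial function -/

section Functional

open Polynomial

variable {V : Type} {G : SimpleGraph V} {q : ℕ}

/-- Averaging over neighbours, on finitely supported functions. -/
noncomputable def IsHomTree.avg (h : IsHomTree G q) : Module.End ℝ (V →₀ ℝ) :=
  Finsupp.linearCombination ℝ
    (fun x => ((q : ℝ) + 1)⁻¹ • ∑ u ∈ h.nbr x, Finsupp.single u (1 : ℝ))

lemma IsHomTree.radForm_avg (h : IsHomTree G q) (ψ : ℕ → ℝ) (f g : V →₀ ℝ) :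
    radForm G ψ (h.avg f) g = radForm G (radT q ψ) f g := by
  have : (radForm G ψ) ∘ₗ h.avg = radForm G (radT q ψ) := by
    ext x y
    have hq : (q : ℝ) + 1 ≠ 0 := by positivity
    simp [IsHomTree.avg, h.sum_nbr, hq]
  exact congrArg (fun B => B f g) this

lemma radForm_add (ψ χ : ℕ → ℝ) : radForm G (ψ + χ) = radForm G ψ + radForm G χ := by
  ext x y
  simp

lemma radForm_smul (c : ℝ) (ψ : ℕ → ℝ) : radForm G (c • ψ) = c • radForm G ψ := by
  ext x y
  simp

lemma IsHomTree.radForm_aeval (h : IsHomTree G q) (p : ℝ[X]) (ψ : ℕ → ℝ) (f g : V →₀ ℝ) :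
    radForm G ψ (aeval h.avg p f) g = radForm G (aeval (radT q) p ψ) f g := by
  induction p using Polynomial.induction_on' with
  | add p₁ p₂ h₁ h₂ => simp [h₁, h₂, radForm_add]
  | monomial n a =>
    have hpow : ∀ (n : ℕ) (ψ : ℕ → ℝ),
        radForm G ψ ((h.avg ^ n) f) g = radForm G ((radT q ^ n) ψ) f g := by
      intro n
      induction n with
      | zero => simp
      | succ n ih =>
        intro ψ
        rw [pow_succ', Module.End.mul_apply, h.radForm_avg, ih, pow_succ, Module.End.mul_apply]
    simp [aeval_monomial, Module.algebraMap_end_apply, hpow, radForm_smul]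

/-- The functional on polynomials sending `P_n` to `ψ n`. -/
noncomputable def momentL (q : ℕ) (ψ : ℕ → ℝ) : ℝ[X] →ₗ[ℝ] ℝ where
  toFun p := aeval (radT q) p ψ 0
  map_add' p r := by simp
  map_smul' c p := by simp

lemma IsHomTree.momentL_mul_self (h : IsHomTree G q) (ψ : ℕ → ℝ)
    (hψ : ∀ f, 0 ≤ radForm G ψ f f) (p : ℝ[X]) : 0 ≤ momentL q ψ (p * p) := by
  obtain ⟨o⟩ := h.1.nonempty
  have h1 := hψ (aeval h.avg p (Finsupp.single o 1))
  rw [h.radForm_aeval, radForm_comm, h.radForm_aeval, radForm_single] at h1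
  simpa [momentL] using h1

lemma momentL_X_pow (ψ : ℕ → ℝ) (M : ℝ) (hψ : ∀ n, |ψ n| ≤ M) (m : ℕ) :
    |momentL q ψ (X ^ m)| ≤ M := by
  have : ∀ n, |(radT q ^ m) ψ n| ≤ M := by
    induction m with
    | zero => simpa using hψ
    | succ m ih =>
      intro n
      rw [pow_succ', Module.End.mul_apply]
      rcases n with _ | n
      · exact ih 1
      · rw [radT_succ, abs_div, abs_of_pos (by positivity : (0 : ℝ) < q + 1),
          div_le_iff₀ (by positivity)]
        refine (abs_add_le _ _).trans ?_
        rw [abs_mul, abs_of_nonneg (by positivity : (0 : ℝ) ≤ q)]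
        have := mul_le_mul_of_nonneg_left (ih (n+2)) (by positivity : (0 : ℝ) ≤ q)
        linarith [ih n]
  simpa [momentL] using this 0

/-- `treeP` as a sequence of formal polynomials. -/
noncomputable def treePoly (q : ℕ) : ℕ → ℝ[X]
  | 0 => 1
  | 1 => X
  | (n+2) => C (1 + 1/(q:ℝ)) * X * treePoly q (n+1) - C (1/(q:ℝ)) * treePoly q n

lemma treePoly_eval (q n : ℕ) (s : ℝ) : (treePoly q n).eval s = treeP q n s := by
  induction n using Nat.twoStepInduction with
  | zero => simp [treePoly, treeP]
  | one => simp [treePoly, treeP]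
  | more n h1 h2 => simp [treePoly, treeP, h1, h2]

lemma momentL_treePoly (hq : 2 ≤ q) (n : ℕ) : ∀ ψ : ℕ → ℝ, momentL q ψ (treePoly q n) = ψ n := by
  have hq0 : (q : ℝ) ≠ 0 := by positivity
  have hq1 : (q : ℝ) + 1 ≠ 0 := by positivity
  induction n using Nat.twoStepInduction with
  | zero => intro ψ; simp [momentL, treePoly]
  | one => intro ψ; simp [momentL, treePoly]
  | more n h1 h2 =>
    intro ψ
    have h3 : momentL q ψ (X * treePoly q (n+1)) = momentL q (radT q ψ) (treePoly q (n+1)) := by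
      simp [momentL, mul_comm X]
    rw [treePoly, map_sub, mul_assoc, ← smul_eq_C_mul, ← smul_eq_C_mul, map_smul, map_smul, h3,
      h1, h2, radT_succ, smul_eq_mul, smul_eq_mul]
    field_simp
    ring

end Functional

lemma treeP_continuous (q n : ℕ) : Continuous (treeP q n) := by
  have : treeP q n = fun s => (treePoly q n).eval s := funext fun s => (treePoly_eval q n s).symm
  rw [this]
  exact (treePoly q n).continuous

/-- For each `n` the tree contains two vertices at distance `n`. -/
lemma wordTree_exists_dist_eq (q : ℕ) (hq : 2 ≤ q) (n : ℕ) : ∃ x y, (wordTree q).dist x y = n := by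
  have h := wordTree_isHomTree q
  obtain ⟨y⟩ := h.1.nonempty
  suffices ∃ x, (wordTree q).dist x y = n from this.elim fun x hx => ⟨x, y, hx⟩
  induction n with
  | zero => exact ⟨y, by simp⟩
  | succ n ih =>
    obtain ⟨x, hx⟩ := ih
    by_contra! hno
    have hall : ∀ u ∈ h.nbr x, (wordTree q).dist u y + 1 = (wordTree q).dist x y := fun u hu =>
      (h.dist_cases y (h.mem_nbr.1 hu)).resolve_right fun h1 => hno u (by rw [h1, hx])
    have h1 : (h.nbr x).card ≤ 1 := Finset.card_le_one.2 fun u hu v hv =>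
      h.closer_unique (h.mem_nbr.1 hu) (h.mem_nbr.1 hv) (hall u hu) (hall v hv)
    rw [h.card_nbr] at h1
    omega

/-- A positive definite radial function is real and bounded by its value at `0`: test the kernel
on two points at distance `n` with coefficients `(1, ±1)`. -/
lemma real_and_bounded (q : ℕ) (hq : 2 ≤ q) (φ : ℕ → ℂ)
    (hφ : IsPDKernel (fun x y => φ ((wordTree q).dist x y))) (n : ℕ) :
    (φ n).im = 0 ∧ |(φ n).re| ≤ (φ 0).re := by
  obtain ⟨x, y, hxy⟩ := wordTree_exists_dist_eq q hq n
  have h1 := hφ 2 ![x, y] ![1, 1]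
  have h2 := hφ 2 ![x, y] ![1, -1]
  have h0 := hφ 1 ![x] ![1]
  simp only [Fin.sum_univ_two, Fin.sum_univ_one, Matrix.cons_val_zero, Matrix.cons_val_one,
    SimpleGraph.dist_self, hxy, (wordTree q).dist_comm (u := y) (v := x), map_one, map_neg,
    mul_one, mul_neg, neg_neg, Complex.nonneg_iff, Complex.add_re, Complex.add_im,
    Complex.neg_re, Complex.neg_im] at h0 h1 h2
  refine ⟨by linarith [h0.2, h1.2], abs_le.2 ⟨by linarith [h1.1], by linarith [h2.1]⟩⟩

theorem stmt_0 (q : ℕ) (hq : 2 ≤ q) (φ : ℕ → ℂ) :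
    (∀ (V : Type) (G : SimpleGraph V), IsHomTree G q →
        IsPDKernel (fun x y => φ (G.dist x y)))
      ↔ ∃ μ : Measure (Set.Icc (-1 : ℝ) 1), IsFiniteMeasure μ ∧
          ∀ n : ℕ, φ n = ∫ s, ((treeP q n (s : ℝ) : ℝ) : ℂ) ∂μ := by
  constructor
  · intro hφ
    have h := wordTree_isHomTree q
    have hpd := hφ _ _ h
    have hrb := real_and_bounded q hq φ hpd
    let ψ : ℕ → ℝ := fun n => (φ n).re
    have hψ : ∀ n, φ n = (ψ n : ℂ) := fun n => Complex.ext rfl (by simp [(hrb n).1])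
    have hform := radForm_nonneg_of_isPDKernel (G := wordTree q) ψ (by simpa only [hψ] using hpd)
    obtain ⟨μ, hμ, hL⟩ := exists_measure_of_moments (momentL q ψ)
      (h.momentL_mul_self ψ hform) (ψ 0) (momentL_X_pow ψ (ψ 0) fun n => (hrb n).2)
    refine ⟨μ, hμ, fun n => ?_⟩
    rw [hψ, ← momentL_treePoly hq n ψ, hL, integral_complex_ofReal]
    simp only [treePoly_eval]
  · rintro ⟨μ, hμ, hφ⟩ V G h
    intro n x z
    have hint : ∀ m, Integrable (fun s : Set.Icc (-1 : ℝ) 1 => ((treeP q m s : ℝ) : ℂ)) μ :=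
      fun m => Continuous.integrable_of_hasCompactSupport
        (Complex.continuous_ofReal.comp ((treeP_continuous q m).comp continuous_subtype_val))
        (HasCompactSupport.of_compactSpace _)
    have h1 : ∑ i, ∑ j, φ (G.dist (x i) (x j)) * (starRingEnd ℂ) (z i) * z j
        = ∫ s : Set.Icc (-1 : ℝ) 1, ∑ i, ∑ j,
          ((treeP q (G.dist (x i) (x j)) s : ℝ) : ℂ) * (starRingEnd ℂ) (z i) * z j ∂μ := by
      rw [integral_finsetSum _ fun i _ => integrable_finsetSum _ fun j _ =>
        ((hint _).mul_const _).mul_const _]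
      refine Finset.sum_congr rfl fun i _ => ?_
      rw [integral_finsetSum _ fun j _ => ((hint _).mul_const _).mul_const _]
      refine Finset.sum_congr rfl fun j _ => ?_
      rw [integral_mul_const, integral_mul_const, hφ]
    change 0 ≤ ∑ i, ∑ j, φ (G.dist (x i) (x j)) * (starRingEnd ℂ) (z i) * z j
    rw [h1]
    refine integral_nonneg_of_ae (Filter.Eventually.of_forall fun s => ?_)
    exact isPDKernel_of_radForm (fun m => treeP q m s)
      (treeP_radForm_nonneg hq h s.2) n x z
end

section
/- Let 2 ≤ q < ∞. For every s ∈ [-1,1], the function φ : ℕ → ℝ given by φ(n) = P_n^{(q)}(s) belongs to R₊(T_q); that is, the kernel (x,y) ↦ P_{d(x,y)}^{(q)}(s) is positive definite on the (q+1)-homogeneous tree T_q. -/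
/-!
Fix a root `o` and give every other vertex `x` its parent `p x`, the neighbour closer to `o`. On
finitely supported functions let `treeForm` be the bilinear form with kernel `P_{d(x,y)}(s)`. The
three-term recurrence says that the best prediction of `δ_x` from the vertices closer to the root
is `(1 + 1/q) s δ_{p x} - (1/q) δ_{p (p x)}` (`s δ_o` if `p x = o`). Hence the
innovations `innov x`, the differences between `δ_x` and these predictions, are orthogonal for
vertices that are not siblings (`innov_orth`), while on the `N` children of a common parent their
Gram matrix is `c (I - J / N)`, with `J` the all-ones matrix and `c = (1 - s²)(q + 1)/q`
(`innov_self`, `innov_sibling`). Here `N = q` except at the root, where `N = q + 1`. As `|s| ≤ 1`,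
`c ≥ 0` and each block is positive semidefinite by Cauchy-Schwarz (`block_psd`). The innovations
span (`innov_span`), so the whole form is positive semidefinite (`treeForm_nonneg`). Complex
coefficients are handled through real and imaginary parts.

The only facts on trees used are that a geodesic from `x` to a vertex not further from the root
starts with the parent of `x` (`IsParent.dist_eq`), and the count of children
(`IsParent.card_children_le`).
-/

open MeasureTheory Filter Finset
open scoped ComplexOrder

/-! ### Geodesics in a rooted tree -/

lemma exists_adj_closer {V : Type} {G : SimpleGraph V} (hc : G.Connected) {x y : V} (h : x ≠ y) :
    ∃ w, G.Adj x w ∧ G.dist y w + 1 = G.dist y x := by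
  obtain ⟨p, hp⟩ := hc.exists_walk_length_eq_dist x y
  cases p with
  | nil => exact absurd rfl h
  | @cons _ w _ hadj p =>
    refine ⟨w, hadj, ?_⟩
    have h1 := SimpleGraph.dist_le p
    have h2 := hc.dist_triangle (u := x) (v := w) (w := y)
    rw [SimpleGraph.dist_eq_one_iff_adj.2 hadj] at h2
    rw [SimpleGraph.Walk.length_cons] at hp
    rw [SimpleGraph.dist_comm (u := y), SimpleGraph.dist_comm (u := y)]
    omega

/-- In a tree, the neighbour of `x` lying closer to a given vertex `y` is unique. -/
lemma closer_unique {V : Type} {G : SimpleGraph V} (hc : G.Connected) (ha : G.IsAcyclic)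
    {x y w w' : V} (h : G.Adj x w) (h' : G.Adj x w')
    (hd : G.dist y w + 1 = G.dist y x) (hd' : G.dist y w' + 1 = G.dist y x) : w = w' := by
  obtain ⟨p, hp⟩ := hc.exists_walk_length_eq_dist y w
  obtain ⟨p', hp'⟩ := hc.exists_walk_length_eq_dist y w'
  have e : (p.concat h.symm).IsPath :=
    SimpleGraph.Walk.isPath_of_length_eq_dist _ (by rw [SimpleGraph.Walk.length_concat]; omega)
  have e' : (p'.concat h'.symm).IsPath :=
    SimpleGraph.Walk.isPath_of_length_eq_dist _ (by rw [SimpleGraph.Walk.length_concat]; omega)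
  have := congrArg (fun r : G.Path y x => r.1.penultimate) ((ha.subsingleton_path y x).elim ⟨_, e⟩ ⟨_, e'⟩)
  simpa using this

/-- In a tree, a geodesic which starts by moving away from the root `o` keeps moving away. -/
lemma dist_add_of_away {V : Type} {G : SimpleGraph V} (hc : G.Connected) (ha : G.IsAcyclic)
    (o y : V) (n : ℕ) : ∀ x w, G.Adj x w → G.dist o w = G.dist o x + 1 →
      G.dist y w + 1 = G.dist y x → G.dist y w = n → G.dist o y = G.dist o x + G.dist y x := by
  induction n with
  | zero =>
    intro x w hadj h1 h2 h3
    obtain rfl := hc.dist_eq_zero_iff.1 h3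
    omega
  | succ n ih =>
    intro x w hadj h1 h2 h3
    have hne : w ≠ y := by rintro rfl; simp at h3
    obtain ⟨w', hw', hd⟩ := exists_adj_closer hc hne
    have h4 : G.dist o w' = G.dist o w + 1 := by
      rcases (show G.IsTree from ⟨hc, ha⟩).dist_eq_dist_add_one_of_adj o hw' with h | h
      · obtain rfl := closer_unique hc ha hadj.symm hw' h1.symm h.symm
        omega
      · exact h
    have := ih w w' hw' h4 hd (by omega)
    omega

/-- `p` sends every vertex other than the root `o` to a neighbour closer to `o`. -/
def IsParent {V : Type} (G : SimpleGraph V) (o : V) (p : V → V) : Prop :=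
  ∀ x, x ≠ o → G.Adj x (p x) ∧ G.dist o (p x) + 1 = G.dist o x

/-- A geodesic from `x` to a vertex not further from the root passes through the parent of `x`. -/
lemma IsParent.dist_eq {V : Type} {G : SimpleGraph V} (hc : G.Connected) (ha : G.IsAcyclic)
    {o : V} {p : V → V} (hp : IsParent G o p) {x y : V} (hx : x ≠ o) (hxy : x ≠ y)
    (hle : G.dist o y ≤ G.dist o x) : G.dist x y = G.dist (p x) y + 1 := by
  obtain ⟨w, hw, hd⟩ := exists_adj_closer hc hxy
  obtain ⟨h1, h2⟩ := hp x hx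
  rcases (show G.IsTree from ⟨hc, ha⟩).dist_eq_dist_add_one_of_adj o hw with h | h
  · obtain rfl := closer_unique hc ha hw h1 h.symm h2
    rw [SimpleGraph.dist_comm, ← hd, SimpleGraph.dist_comm]
  · have := dist_add_of_away hc ha o y _ x w hw h hd rfl
    omega

open Classical in
/-- A vertex other than the root has at most `q` children, since its parent is one of its `q + 1`
neighbours; the root has at most `q + 1`. -/
lemma IsParent.card_children_le {V : Type} {G : SimpleGraph V} {q : ℕ} (hG : IsHomTree G q)
    {o : V} {p : V → V} (hp : IsParent G o p) (v : V) (F : Finset V)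
    (hF : ∀ x ∈ F, x ≠ o ∧ p x = v) : #F ≤ if v = o then q + 1 else q := by
  obtain ⟨hc, ha, hn⟩ := hG
  have hfin : (G.neighborSet v).Finite := Set.finite_of_ncard_ne_zero (by rw [hn]; omega)
  have hsub : ∀ x ∈ F, x ∈ G.neighborSet v := by
    intro x hx
    obtain ⟨h1, rfl⟩ := hF x hx
    exact (hp x h1).1.symm
  split_ifs with hv
  · rw [← hn v, ← Set.ncard_coe_finset]
    exact Set.ncard_le_ncard (fun x hx => hsub x hx) hfin
  · have hnot : p v ∉ F := by
      intro hmem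
      obtain ⟨h1, h2⟩ := hF _ hmem
      have h3 := (hp _ h1).2
      have h4 := (hp v hv).2
      rw [h2] at h3
      omega
    have : (((insert (p v) F : Finset V) : Set V)).ncard ≤ (G.neighborSet v).ncard := by
      refine Set.ncard_le_ncard (fun x hx => ?_) hfin
      rcases Finset.mem_insert.1 (Finset.mem_coe.1 hx) with rfl | hx
      · exact (hp v hv).1
      · exact hsub x hx
    rw [Set.ncard_coe_finset, Finset.card_insert_of_notMem hnot, hn] at this
    omega

/-! ### Block-diagonal kernels -/

/-- A block-diagonal kernel whose block with label `k` is `D k` times the identity matrix minus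
`E k` times the all-ones matrix is positive semidefinite as soon as `E k` times the size of the
block is at most `D k`. This is Cauchy-Schwarz on each block. -/
lemma block_psd {V K : Type} [DecidableEq V] [DecidableEq K] (S : Finset V) (a : V → ℝ)
    (κ : V → K) (D E : K → ℝ) (hE : ∀ k, 0 ≤ E k)
    (h : ∀ k, ∀ F : Finset V, (∀ x ∈ F, κ x = k) → (#F : ℝ) * E k ≤ D k) :
    0 ≤ ∑ x ∈ S, ∑ y ∈ S, a x * a y *
      (if κ x = κ y then (if x = y then D (κ x) else 0) - E (κ x) else 0) := by
  have key : ∀ x ∈ S, ∑ y ∈ S, a x * a y *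
      (if κ x = κ y then (if x = y then D (κ x) else 0) - E (κ x) else 0)
      = D (κ x) * a x ^ 2 - E (κ x) * (a x * ∑ y ∈ S with κ y = κ x, a y) := by
    intro x hx
    rw [Finset.mul_sum, Finset.sum_filter, Finset.mul_sum]
    have : D (κ x) * a x ^ 2 = ∑ y ∈ S, if x = y then D (κ x) * a x ^ 2 else 0 := by
      simp [hx]
    rw [this, ← Finset.sum_sub_distrib]
    refine Finset.sum_congr rfl fun y _ => ?_
    by_cases hxy : x = y
    · subst hxy; simp; ring
    · by_cases hk : κ x = κ y
      · simp [hxy, hk]; ring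
      · simp [hxy, hk, Ne.symm hk]
  rw [Finset.sum_congr rfl key,
    ← Finset.sum_fiberwise_of_maps_to (t := S.image κ) (g := κ)
      (fun x hx => Finset.mem_image_of_mem κ hx)]
  refine Finset.sum_nonneg fun k _ => ?_
  have e : ∑ x ∈ S with κ x = k,
      (D (κ x) * a x ^ 2 - E (κ x) * (a x * ∑ y ∈ S with κ y = κ x, a y))
      = D k * ∑ x ∈ S with κ x = k, a x ^ 2 - E k * (∑ x ∈ S with κ x = k, a x) ^ 2 := by
    rw [sq (∑ x ∈ S with κ x = k, a x), Finset.sum_mul, Finset.mul_sum, Finset.mul_sum,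
      ← Finset.sum_sub_distrib]
    refine Finset.sum_congr rfl fun x hx => ?_
    rw [(Finset.mem_filter.1 hx).2]
  rw [e, sub_nonneg]
  have h1 := sq_sum_le_card_mul_sum_sq (s := {x ∈ S | κ x = k}) (f := a)
  have h2 := h k {x ∈ S | κ x = k} (fun x hx => (Finset.mem_filter.1 hx).2)
  have h3 : 0 ≤ ∑ x ∈ S with κ x = k, a x ^ 2 := Finset.sum_nonneg fun _ _ => sq_nonneg _
  calc _ ≤ E k * (#{x ∈ S | κ x = k} * ∑ x ∈ S with κ x = k, a x ^ 2) :=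
        mul_le_mul_of_nonneg_left h1 (hE k)
    _ = (#{x ∈ S | κ x = k} * E k) * ∑ x ∈ S with κ x = k, a x ^ 2 := by ring
    _ ≤ _ := mul_le_mul_of_nonneg_right h2 h3

/-! ### The quadratic form and its innovations -/

/-- The bilinear form on finitely supported functions with kernel `P_{d(x,y)}(s)`. -/
noncomputable def treeForm {V : Type} (G : SimpleGraph V) (q : ℕ) (s : ℝ) :
    (V →₀ ℝ) →ₗ[ℝ] (V →₀ ℝ) →ₗ[ℝ] ℝ :=
  Finsupp.linearCombination ℝ fun x =>
    Finsupp.linearCombination ℝ fun y => treeP q (G.dist x y) s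

lemma treeForm_single {V : Type} (G : SimpleGraph V) (q : ℕ) (s : ℝ) (x y : V) (a b : ℝ) :
    treeForm G q s (Finsupp.single x a) (Finsupp.single y b)
      = a * b * treeP q (G.dist x y) s := by
  simp [treeForm]; ring

lemma treeForm_comm {V : Type} (G : SimpleGraph V) (q : ℕ) (s : ℝ) (u v : V →₀ ℝ) :
    treeForm G q s u v = treeForm G q s v u := by
  have : treeForm G q s = (treeForm G q s).flip := by
    ext x y
    simp [treeForm_single, SimpleGraph.dist_comm]
  conv_lhs => rw [this]
  rfl

open Classical in
/-- The innovation at `x`: the point mass at `x` minus its predictor from the levels closer to the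
root `o`. The predictor is `(1 + 1/q) s δ_{p x} - (1/q) δ_{p (p x)}` in general, `s δ_o` for a
neighbour of the root, and `0` for the root itself. -/
noncomputable def innov {V : Type} (q : ℕ) (s : ℝ) (o : V) (p : V → V) (x : V) : V →₀ ℝ :=
  if x = o then Finsupp.single o 1
  else if p x = o then Finsupp.single x 1 - s • Finsupp.single o 1
  else Finsupp.single x 1 - ((1 + 1 / (q : ℝ)) * s) • Finsupp.single (p x) 1
    + (1 / (q : ℝ)) • Finsupp.single (p (p x)) 1

lemma treeForm_innov_one {V : Type} (G : SimpleGraph V) (q : ℕ) (s : ℝ) {o : V} {p : V → V}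
    {x y : V} (hx : x ≠ o) (hpx : p x = o) :
    treeForm G q s (innov q s o p x) (Finsupp.single y 1)
      = treeP q (G.dist x y) s - s * treeP q (G.dist o y) s := by
  simp only [innov, if_neg hx, if_pos hpx, map_sub, map_smul, LinearMap.sub_apply,
    LinearMap.smul_apply, treeForm_single, smul_eq_mul, one_mul]

lemma treeForm_innov_two {V : Type} (G : SimpleGraph V) (q : ℕ) (s : ℝ) {o : V} {p : V → V}
    {x y : V} (hx : x ≠ o) (hpx : p x ≠ o) :
    treeForm G q s (innov q s o p x) (Finsupp.single y 1)
      = treeP q (G.dist x y) s - (1 + 1 / (q : ℝ)) * s * treeP q (G.dist (p x) y) s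
        + (1 / (q : ℝ)) * treeP q (G.dist (p (p x)) y) s := by
  simp only [innov, if_neg hx, if_neg hpx, map_add, map_sub, map_smul, LinearMap.add_apply,
    LinearMap.sub_apply, LinearMap.smul_apply, treeForm_single, smul_eq_mul, one_mul]

lemma IsParent.dist_root_eq_one {V : Type} {G : SimpleGraph V} {o : V} {p : V → V}
    (hp : IsParent G o p) {x : V} (hx : x ≠ o) (h : p x = o) : G.dist o x = 1 := by
  have := (hp x hx).2
  rw [h] at this
  simpa using this.symm

/-- The innovation at `x` is orthogonal to every other vertex not further from the root, siblings
of `x` excepted. Distances from such a vertex `y` to `x`, `p x`, `p (p x)` are consecutive integers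
(or `1, 0, 1` when `y = p x`), so this is the three-term recurrence of `treeP`. -/
lemma innov_orth {V : Type} {G : SimpleGraph V} {q : ℕ} (s : ℝ)
    (hc : G.Connected) (ha : G.IsAcyclic) {o : V} {p : V → V} (hp : IsParent G o p) {x y : V}
    (hxy : x ≠ y) (hle : G.dist o y ≤ G.dist o x) (hsib : y = o ∨ p x ≠ p y) :
    treeForm G q s (innov q s o p x) (Finsupp.single y 1) = 0 := by
  have hx : x ≠ o := by
    rintro rfl
    rw [SimpleGraph.dist_self] at hle
    exact hxy (hc.dist_eq_zero_iff.1 (by omega))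
  have h1 := hp.dist_eq hc ha hx hxy hle
  have hlx := (hp x hx).2
  by_cases hpx : p x = o
  · rw [treeForm_innov_one G q s hx hpx]
    have hx1 := hp.dist_root_eq_one hx hpx
    have hy : y = o := by
      by_contra hy
      have hly := (hp y hy).2
      have : o = p y := hc.dist_eq_zero_iff.1 (by omega)
      rcases hsib with h | h
      · exact hy h
      · exact h (hpx.trans this)
    subst hy
    rw [SimpleGraph.dist_comm, hx1]
    simp [treeP]
  · rw [treeForm_innov_two G q s hx hpx]
    have hlpx := (hp _ hpx).2
    by_cases hy : y = p x
    · subst hy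
      rw [SimpleGraph.dist_self] at h1
      rw [h1, SimpleGraph.dist_self, SimpleGraph.dist_eq_one_iff_adj.2 (hp _ hpx).1.symm]
      simp [treeP]; ring
    have h2 : G.dist (p x) y = G.dist (p (p x)) y + 1 := by
      by_cases hl : G.dist o y ≤ G.dist o (p x)
      · exact hp.dist_eq hc ha hpx (Ne.symm hy) hl
      have hyo : y ≠ o := by rintro rfl; simp at hl
      have hly := (hp y hyo).2
      have hne : p x ≠ p y := hsib.resolve_left hyo
      have e1 : G.dist y (p x) = G.dist (p y) (p x) + 1 :=
        hp.dist_eq hc ha hyo hy (by omega)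
      have e2 : G.dist (p x) (p y) = G.dist (p (p x)) (p y) + 1 :=
        hp.dist_eq hc ha hpx hne (by omega)
      have e3 : G.dist y (p (p x)) = G.dist (p y) (p (p x)) + 1 :=
        hp.dist_eq hc ha hyo (by rintro h; rw [← h] at hlpx; omega) (by omega)
      rw [SimpleGraph.dist_comm, e1, SimpleGraph.dist_comm, e2, SimpleGraph.dist_comm, ← e3,
        SimpleGraph.dist_comm]
    rw [h1, h2]
    simp [treeP]

open Classical in
/-- The variance of an innovation; `N` is the number of children of the parent of `x`. -/
lemma innov_self {V : Type} {G : SimpleGraph V} {q : ℕ} (hq : 2 ≤ q) (s : ℝ)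
    (hc : G.Connected) (ha : G.IsAcyclic) {o : V} {p : V → V} (hp : IsParent G o p) {x : V}
    (hx : x ≠ o) (N : ℝ) (hN : N = if p x = o then (q : ℝ) + 1 else q) :
    treeForm G q s (innov q s o p x) (Finsupp.single x 1)
      = (1 - s ^ 2) * (q + 1) / q * (1 - 1 / N) := by
  have hq0 : (q : ℝ) ≠ 0 := by positivity
  have hq1 : (q : ℝ) + 1 ≠ 0 := by positivity
  by_cases hpx : p x = o
  · rw [treeForm_innov_one G q s hx hpx, hN, if_pos hpx, hp.dist_root_eq_one hx hpx]
    simp [treeP]; field_simp; ring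
  · have hlpx := (hp _ hpx).2
    have hlx := (hp x hx).2
    have e1 : G.dist (p x) x = 1 := SimpleGraph.dist_eq_one_iff_adj.2 (hp x hx).1.symm
    have e2 : G.dist x (p (p x)) = 2 := by
      rw [hp.dist_eq hc ha hx (by rintro h; rw [← h] at hlpx; omega) (by omega),
        SimpleGraph.dist_eq_one_iff_adj.2 (hp _ hpx).1]
    rw [treeForm_innov_two G q s hx hpx, hN, if_neg hpx, e1, SimpleGraph.dist_comm (u := p (p x)),
      e2]
    simp [treeP]; field_simp; ring

open Classical in
/-- The covariance of an innovation with a sibling; `N` is the number of children of the common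
parent. -/
lemma innov_sibling {V : Type} {G : SimpleGraph V} {q : ℕ} (hq : 2 ≤ q) (s : ℝ)
    (hc : G.Connected) (ha : G.IsAcyclic) {o : V} {p : V → V} (hp : IsParent G o p) {x y : V}
    (hx : x ≠ o) (hy : y ≠ o) (hxy : x ≠ y) (h : p x = p y)
    (N : ℝ) (hN : N = if p x = o then (q : ℝ) + 1 else q) :
    treeForm G q s (innov q s o p x) (Finsupp.single y 1)
      = (1 - s ^ 2) * (q + 1) / q * (0 - 1 / N) := by
  have hq0 : (q : ℝ) ≠ 0 := by positivity
  have hq1 : (q : ℝ) + 1 ≠ 0 := by positivity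
  have hlx := (hp x hx).2
  have hly := (hp y hy).2
  have e1 : G.dist (p x) y = 1 := SimpleGraph.dist_eq_one_iff_adj.2 (h ▸ (hp y hy).1.symm)
  have e0 : G.dist x y = 2 := by
    rw [hp.dist_eq hc ha hx hxy (by rw [← hlx, ← hly, h]), e1]
  by_cases hpx : p x = o
  · rw [treeForm_innov_one G q s hx hpx, hN, if_pos hpx, e0,
      hp.dist_root_eq_one hy (h ▸ hpx)]
    simp [treeP]; field_simp; ring
  · have hlpx := (hp _ hpx).2
    have e2 : G.dist y (p (p x)) = 2 := by
      rw [hp.dist_eq hc ha hy (by rintro h'; rw [← h'] at hlpx; rw [h] at hlpx; omega)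
        (by rw [← hly, ← h]; omega), ← h, SimpleGraph.dist_eq_one_iff_adj.2 (hp _ hpx).1]
    rw [treeForm_innov_two G q s hx hpx, hN, if_neg hpx, e0, e1,
      SimpleGraph.dist_comm (u := p (p x)), e2]
    simp [treeP]; field_simp; ring

/-- The predictor of `y` lives on levels strictly below that of `x`, where the innovation at `x` is
orthogonal to everything. -/
lemma innov_gram {V : Type} {G : SimpleGraph V} {q : ℕ} (s : ℝ)
    (hc : G.Connected) (ha : G.IsAcyclic) {o : V} {p : V → V} (hp : IsParent G o p) {x y : V}
    (hle : G.dist o y ≤ G.dist o x) :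
    treeForm G q s (innov q s o p x) (innov q s o p y)
      = treeForm G q s (innov q s o p x) (Finsupp.single y 1) := by
  have low : ∀ w, G.dist o w < G.dist o x →
      treeForm G q s (innov q s o p x) (Finsupp.single w 1) = 0 ∨ w ≠ o ∧ p x = p w := by
    intro w hw
    by_cases h : w ≠ o ∧ p x = p w
    · exact Or.inr h
    · refine Or.inl (innov_orth s hc ha hp (by rintro rfl; omega) hw.le ?_)
      tauto
  have low : ∀ w, G.dist o w < G.dist o x →
      treeForm G q s (innov q s o p x) (Finsupp.single w 1) = 0 := by
    intro w hw
    refine (low w hw).resolve_right ?_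
    rintro ⟨hwo, h⟩
    have hxo : x ≠ o := by rintro rfl; simp at hw
    have h1 := (hp x hxo).2
    have h2 := (hp w hwo).2
    rw [h] at h1
    omega
  by_cases hy : y = o
  · subst hy; simp [innov]
  have hly := (hp y hy).2
  conv_lhs => rw [innov.eq_def q s o p y]
  by_cases hpy : p y = o
  · rw [if_neg hy, if_pos hpy, map_sub, map_smul, low o (by rw [hpy] at hly; omega)]
    simp
  · have hlpy := (hp _ hpy).2
    rw [if_neg hy, if_neg hpy, map_add, map_sub, map_smul, map_smul, low (p y) (by omega),
      low (p (p y)) (by omega)]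
    simp

/-- The innovations span all finitely supported functions, by induction on the level. -/
lemma innov_span {V : Type} {G : SimpleGraph V} {q : ℕ} (s : ℝ)
    {o : V} {p : V → V} (hp : IsParent G o p) (n : ℕ) :
    ∀ x, G.dist o x = n →
      Finsupp.single x (1 : ℝ) ∈ Submodule.span ℝ (Set.range (innov q s o p)) := by
  induction n using Nat.strong_induction_on with
  | _ n ih =>
    intro x hxn
    have hmem : innov q s o p x ∈ Submodule.span ℝ (Set.range (innov q s o p)) :=
      Submodule.subset_span ⟨x, rfl⟩
    by_cases hx : x = o
    · simpa [innov, hx] using hmem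
    have hlx := (hp x hx).2
    by_cases hpx : p x = o
    · have h1 := ih (G.dist o (p x)) (by omega) _ rfl
      rw [hpx] at h1
      have := Submodule.add_mem _ hmem (Submodule.smul_mem _ s h1)
      simpa only [innov, if_neg hx, if_pos hpx, sub_add_cancel] using this
    · have hlpx := (hp _ hpx).2
      have h1 := ih (G.dist o (p x)) (by omega) _ rfl
      have h2 := ih (G.dist o (p (p x))) (by omega) _ rfl
      have := Submodule.add_mem _ (Submodule.sub_mem _ hmem (Submodule.smul_mem _ (1 / (q : ℝ)) h2))
        (Submodule.smul_mem _ ((1 + 1 / (q : ℝ)) * s) h1)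
      simpa only [innov, if_neg hx, if_neg hpx, add_sub_cancel_right, sub_add_cancel] using this

/-! ### Positive definiteness -/

lemma treeForm_nonneg {V : Type} {G : SimpleGraph V} {q : ℕ} (hq : 2 ≤ q) {s : ℝ}
    (hs : s ∈ Set.Icc (-1 : ℝ) 1) (hG : IsHomTree G q) (z : V →₀ ℝ) :
    0 ≤ treeForm G q s z z := by
  classical
  obtain ⟨hc, ha, hn⟩ := id hG
  obtain ⟨o⟩ := hc.nonempty
  have hq0 : (0 : ℝ) < q := by positivity
  have hex : ∀ x, ∃ w, x ≠ o → G.Adj x w ∧ G.dist o w + 1 = G.dist o x := by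
    intro x
    by_cases hx : x = o
    · exact ⟨o, fun h => absurd hx h⟩
    · obtain ⟨w, hw⟩ := exists_adj_closer hc hx
      exact ⟨w, fun _ => hw⟩
  choose p hp using hex
  have hp : IsParent G o p := hp
  have hz : z ∈ Submodule.span ℝ (Set.range (innov q s o p)) := by
    rw [← Finsupp.sum_single z]
    refine Submodule.sum_mem _ fun x _ => ?_
    have := Submodule.smul_mem _ (z x) (innov_span (q := q) s hp _ x rfl)
    simpa using this
  obtain ⟨a, rfl⟩ := (Finsupp.mem_span_range_iff_exists_finsupp).1 hz
  let c : ℝ := (1 - s ^ 2) * (q + 1) / q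
  have hc0 : 0 ≤ c := by
    have : 0 ≤ 1 - s ^ 2 := by nlinarith [hs.1, hs.2]
    positivity
  -- the root gets a block of its own, labelled `none`; other vertices are grouped by parent
  let κ : V → Option V := fun x => if x = o then none else some (p x)
  let N : V → ℝ := fun v => if v = o then (q : ℝ) + 1 else q
  have hN : ∀ v, 0 < N v := by intro v; simp only [N]; split_ifs <;> positivity
  let D : Option V → ℝ := fun k => k.elim 1 fun _ => c
  let E : Option V → ℝ := fun k => k.elim 0 fun v => c / N v
  have gram : ∀ x y, G.dist o y ≤ G.dist o x →
      treeForm G q s (innov q s o p x) (innov q s o p y)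
      = if κ x = κ y then (if x = y then D (κ x) else 0) - E (κ x) else 0 := by
    intro x y hle
    rw [innov_gram s hc ha hp hle]
    by_cases hxy : x = y
    · subst hxy
      by_cases hx : x = o
      · subst hx
        simp [κ, D, E, innov, treeForm_single, treeP]
      · rw [innov_self hq s hc ha hp hx (N (p x)) rfl]
        simp only [κ, D, E, if_neg hx, if_true, Option.elim]
        ring
    · by_cases hsib : y = o ∨ p x ≠ p y
      · rw [innov_orth s hc ha hp hxy hle hsib, if_neg]
        simp only [κ]
        split_ifs <;> simp_all
      · push Not at hsib
        have hx : x ≠ o := by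
          rintro rfl
          rw [SimpleGraph.dist_self] at hle
          exact hxy (hc.dist_eq_zero_iff.1 (by omega))
        rw [innov_sibling hq s hc ha hp hx hsib.1 hxy hsib.2 (N (p x)) rfl]
        simp only [κ, D, E, if_neg hx, if_neg hsib.1, hsib.2, if_true, if_neg hxy, Option.elim]
        ring
  have gram' : ∀ x y, treeForm G q s (innov q s o p x) (innov q s o p y)
      = if κ x = κ y then (if x = y then D (κ x) else 0) - E (κ x) else 0 := by
    intro x y
    rcases le_total (G.dist o y) (G.dist o x) with h | h
    · exact gram x y h
    · rw [treeForm_comm, gram y x h]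
      by_cases hk : κ x = κ y
      · simp [hk, eq_comm]
      · simp [hk, Ne.symm hk]
  have expand : treeForm G q s (a.sum fun i r => r • innov q s o p i)
      (a.sum fun i r => r • innov q s o p i) = ∑ x ∈ a.support, ∑ y ∈ a.support, a x * a y *
      (if κ x = κ y then (if x = y then D (κ x) else 0) - E (κ x) else 0) := by
    simp only [Finsupp.sum, map_sum, LinearMap.sum_apply, map_smul, LinearMap.smul_apply,
      smul_eq_mul, gram']
    rw [Finset.sum_comm]
    refine Finset.sum_congr rfl fun x _ => ?_
    rw [Finset.mul_sum]
    refine Finset.sum_congr rfl fun y _ => ?_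
    ring
  rw [expand]
  refine block_psd _ _ κ D E ?_ ?_
  · rintro (_ | v)
    · simp [E]
    · exact div_nonneg hc0 (hN v).le
  · rintro (_ | v) F hF
    · simp [E, D]
    · have hcard : (#F : ℝ) ≤ N v := by
        have := hp.card_children_le hG v F (fun x hx => by
          have := hF x hx
          simp only [κ] at this
          split_ifs at this with h
          exact ⟨h, by simpa using this⟩)
        simp only [N]
        split_ifs with h
        · rw [if_pos h] at this; exact_mod_cast this
        · rw [if_neg h] at this; exact_mod_cast this
      change (#F : ℝ) * (c / N v) ≤ c
      rw [mul_div_assoc', div_le_iff₀ (hN v), mul_comm]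
      exact mul_le_mul_of_nonneg_left hcard hc0

theorem stmt_4 (q : ℕ) (hq : 2 ≤ q) (s : ℝ) (hs : s ∈ Set.Icc (-1 : ℝ) 1)
    (V : Type) (G : SimpleGraph V) (hG : IsHomTree G q) :
    IsPDKernel (fun x y => ((treeP q (G.dist x y) s : ℝ) : ℂ)) := by
  intro n x z
  have real : ∀ a : Fin n → ℝ, 0 ≤ ∑ i, ∑ j, a i * a j * treeP q (G.dist (x i) (x j)) s := by
    intro a
    have := treeForm_nonneg hq hs hG (∑ i, Finsupp.single (x i) (a i))
    simp only [map_sum, LinearMap.sum_apply, treeForm_single] at this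
    rwa [Finset.sum_comm] at this
  rw [Complex.nonneg_iff]
  constructor
  · have h := add_nonneg (real fun i => (z i).re) (real fun i => (z i).im)
    rw [← Finset.sum_add_distrib] at h
    simp only [← Finset.sum_add_distrib] at h
    simp only [Complex.re_sum]
    refine h.trans_eq (Finset.sum_congr rfl fun i _ => Finset.sum_congr rfl fun j _ => ?_)
    simp
    ring
  -- the imaginary part of the summand is antisymmetric in `i` and `j`
  · simp only [Complex.im_sum]
    have anti : ∀ f : Fin n → Fin n → ℝ, (∀ i j, f i j = - f j i) → 0 = ∑ i, ∑ j, f i j := by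
      intro f hf
      have : ∑ i, ∑ j, f i j = - ∑ i, ∑ j, f i j := by
        conv_lhs => rw [Finset.sum_comm]
        simp only [← Finset.sum_neg_distrib]
        exact Finset.sum_congr rfl fun i _ => Finset.sum_congr rfl fun j _ => hf j i
      linarith
    refine anti _ fun i j => ?_
    rw [SimpleGraph.dist_comm]
    simp
    ring
end

section
/- Let 2 ≤ q < ∞. Then R₊(T_q × T_q) is strictly contained in R₊(T_q): every φ : ℕ → ℂ that belongs to R₊(T_q × T_q) also belongs to R₊(T_q), and the function φ₀ : ℕ → ℂ given by φ₀(n) = (−1/q)^{n/2} for n even and φ₀(n) = 0 for n odd belongs to R₊(T_q) but does not belong to R₊(T_q × T_q). -/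
/-!
Restricting a kernel on the product of trees to a slice `V × {o}` gives the inclusion of the two
classes, so the content is in the statements about `phi0`. Both rest on the relation
`φ(n + 2) = -(1/q) φ(n)` with `φ(0) = 1`, `φ(1) = 0`, which says that for every vertex `x` the function
`y ↦ φ(d(x, y))` sums to zero over the neighbours of each vertex of the tree.

*Positive definiteness on the tree* (`phi0_psd_ball`). Fix a root `o` and enlarge balls around it.
Let `x`, `y` be in the ball of radius `N + 1`, and let `π` fix the ball of radius `N` and send a vertex
of the new sphere to its grandparent, with weight `c = -1/q` there and `c = 1` elsewhere. For `N ≥ 1`,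
`φ(d(x, y)) = c(x) c(y) φ(d(π x, π y)) + ((q+1)/q) E(x, y)`, where `E` is supported on pairs of
siblings in the new sphere and equals `δ_{x,y} - 1/q` there. As a vertex other than the root has `q`
children, `E` is a projection matrix, hence positive semidefinite (`psd_fibre`). For `N = 0` the
new sphere is a single family of `q + 1` siblings and its weight is `0`. The distance formulas come
from the fact that every edge of a tree is a bridge (`dist_parent`).

*Failure on the product* (`phi0_not_pd_prod`). In the product, the indicator of
`{neighbours of w} × {w}` is isotropic for the form but not in its radical, which is impossible for a
nonnegative form; `q + 2` points with unit coefficients already give a negative value. A tree on which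
to carry this out is the graph of reduced words in `q + 1` letters (`wordGraph`).
-/

open MeasureTheory Filter Finset
open scoped ComplexOrder

/-- The function `φ₀(n) = (-1/q)^(n/2)` for even `n`, `0` for odd `n`. -/
noncomputable def phi0 (q : ℕ) : ℕ → ℂ := fun n =>
  if Even n then (-(1/(q:ℂ)))^(n/2) else 0

/-! ### Distances in trees -/

section Tree
variable {V : Type} {G : SimpleGraph V}

theorem dist_le_of_mem_support {u v x : V} (w : G.Walk u v) (hx : x ∈ w.support) :
    G.dist u x + G.dist x v ≤ w.length := by
  classical
  have h := congrArg SimpleGraph.Walk.length (w.take_spec hx)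
  rw [SimpleGraph.Walk.length_append] at h
  have h1 := SimpleGraph.dist_le (w.takeUntil x hx)
  have h2 := SimpleGraph.dist_le (w.dropUntil x hx)
  omega

/-- If the edge from `p` to `x` leads away from `o` and `y` lies on the far side of it, then the
geodesic from `o` to `y` passes through `x`: the edge is a bridge, so it occurs in the closed-up walk
`p → o → y → x`, but it occurs neither in the geodesic from `o` to `p` nor in that from `y` to `x`. -/
theorem dist_of_beyond (hc : G.Connected) (ha : G.IsAcyclic) {o p x y : V} (hpx : G.Adj p x)
    (hx : G.dist o x = G.dist o p + 1) (hy : G.dist y p = G.dist y x + 1) :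
    G.dist o x + G.dist x y ≤ G.dist o y := by
  obtain ⟨w, hw⟩ := hc.exists_walk_length_eq_dist o y
  obtain ⟨a, haw⟩ := hc.exists_walk_length_eq_dist o p
  obtain ⟨b, hb⟩ := hc.exists_walk_length_eq_dist y x
  have hbr := SimpleGraph.isAcyclic_iff_forall_adj_isBridge.1 ha hpx
  rw [SimpleGraph.isBridge_iff_forall_walk_mem_edges] at hbr
  have h := hbr (a.reverse.append (w.append b))
  simp only [SimpleGraph.Walk.edges_append, SimpleGraph.Walk.edges_reverse, List.mem_append,
    List.mem_reverse] at h
  rcases h with h | h | h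
  · have := dist_le_of_mem_support a (a.snd_mem_support_of_mem_edges h)
    omega
  · have := dist_le_of_mem_support w (w.snd_mem_support_of_mem_edges h)
    omega
  · have := dist_le_of_mem_support b (b.fst_mem_support_of_mem_edges h)
    omega

/-- If `p` is the parent of `x` with respect to the root `o`, every other vertex `y` that is at most as
deep as `x` is reached from `x` through `p`. -/
theorem dist_parent (hc : G.Connected) (ha : G.IsAcyclic) {o p x y : V} (hpx : G.Adj p x)
    (hx : G.dist o x = G.dist o p + 1) (hy : G.dist o y ≤ G.dist o x) (hne : x ≠ y) :
    G.dist x y = G.dist p y + 1 := by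
  have hT : G.IsTree := ⟨hc, ha⟩
  rcases hT.dist_eq_dist_add_one_of_adj y hpx with h | h
  · have := dist_of_beyond hc ha hpx hx h
    have h0 : G.dist x y = 0 := by omega
    exact absurd (hc.dist_eq_zero_iff.1 h0) hne
  · rw [G.dist_comm (u := x), G.dist_comm (u := p)]; exact h

/-- A parent map for the root `o`; its value at `o` itself is arbitrary. -/
theorem exists_parent (hc : G.Connected) (o : V) :
    ∃ p : V → V, ∀ x, x ≠ o → G.Adj (p x) x ∧ G.dist o x = G.dist o (p x) + 1 := by
  have : ∀ x, ∃ p, x ≠ o → G.Adj p x ∧ G.dist o x = G.dist o p + 1 := by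
    intro x
    by_cases hx : x = o
    · exact ⟨o, fun h => absurd hx h⟩
    obtain ⟨w, hw⟩ := hc.exists_walk_length_eq_dist x o
    cases w with
    | nil => exact absurd rfl hx
    | @cons _ p _ h w =>
      refine ⟨p, fun _ => ⟨h.symm, ?_⟩⟩
      have h1 := SimpleGraph.dist_le w
      have h2 := hc.dist_triangle (u := x) (v := p) (w := o)
      rw [SimpleGraph.dist_eq_one_iff_adj.2 h] at h2
      rw [SimpleGraph.Walk.length_cons] at hw
      rw [G.dist_comm (u := o), G.dist_comm (u := o)]
      omega
  choose p hp using this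
  exact ⟨p, hp⟩

open Classical in
/-- The root has `q + 1` children, every other vertex has `q`. -/
theorem children_ncard (hc : G.Connected) (ha : G.IsAcyclic) {q : ℕ}
    (hd : ∀ v : V, (G.neighborSet v).ncard = q + 1) (o : V) (p : V → V)
    (hp : ∀ x, x ≠ o → G.Adj (p x) x ∧ G.dist o x = G.dist o (p x) + 1) (w : V) :
    {v | v ≠ o ∧ p v = w}.ncard = if w = o then q + 1 else q := by
  have huniq : ∀ x p', x ≠ o → G.Adj p' x → G.dist o x = G.dist o p' + 1 → p x = p' := by
    intro x p' hx h1 h2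
    obtain ⟨h3, h4⟩ := hp x hx
    have := dist_parent hc ha h3 h4 (y := p') (by omega) h1.ne'
    rw [SimpleGraph.dist_eq_one_iff_adj.2 h1.symm] at this
    exact hc.dist_eq_zero_iff.1 (by omega)
  have hT : G.IsTree := ⟨hc, ha⟩
  split_ifs with hw
  · subst hw
    rw [← hd w]
    congr 1
    ext v
    simp only [Set.mem_ofPred_eq, SimpleGraph.mem_neighborSet]
    constructor
    · rintro ⟨h1, h2⟩
      have := (hp v h1).1
      rwa [h2] at this
    · intro h
      refine ⟨h.ne', huniq v w h.ne' h ?_⟩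
      rw [SimpleGraph.dist_eq_one_iff_adj.2 h]; simp
  · have : {v | v ≠ o ∧ p v = w} = G.neighborSet w \ {p w} := by
      ext v
      simp only [Set.mem_ofPred_eq, SimpleGraph.mem_neighborSet, Set.mem_sdiff,
        Set.mem_singleton_iff]
      obtain ⟨h3, h4⟩ := hp w hw
      constructor
      · rintro ⟨h1, h2⟩
        obtain ⟨h5, h6⟩ := hp v h1
        rw [h2] at h5 h6
        refine ⟨h5, ?_⟩
        rintro rfl
        omega
      · rintro ⟨h1, h2⟩
        rcases hT.dist_eq_dist_add_one_of_adj o h1 with h | h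
        · exact absurd (huniq w v hw h1.symm h).symm h2
        · have hv : v ≠ o := by
            rintro rfl
            simp at h
          exact ⟨hv, huniq v w hv h1 h⟩
    rw [this, Set.ncard_sdiff_singleton_of_mem, hd w]
    · rfl
    · exact (hp w hw).1.symm
end Tree

/-! ### Existence of the homogeneous tree -/

/-- Reduced words over an alphabet of `q + 1` letters: no two consecutive letters are equal. These are
the elements of the free product of `q + 1` copies of the group of order two. -/
abbrev RWord (q : ℕ) : Type := {l : List (Fin (q + 1)) // l.IsChain (· ≠ ·)}

/-- The graph on reduced words in which a word is joined to the words obtained from it by adding or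
removing a first letter. -/
def wordGraph (q : ℕ) : SimpleGraph (RWord q) where
  Adj a b := (∃ y, b.1 = y :: a.1) ∨ (∃ y, a.1 = y :: b.1)
  symm := ⟨fun _ _ h => h.symm⟩
  loopless := ⟨fun a h => by
    rcases h with ⟨y, h⟩ | ⟨y, h⟩ <;> exact absurd (congrArg List.length h) (by simp)⟩

theorem wordGraph_connected (q : ℕ) : (wordGraph q).Connected := by
  have key : ∀ (l : List (Fin (q + 1))) (hl : l.IsChain (· ≠ ·)),
      (wordGraph q).Reachable ⟨[], List.isChain_nil⟩ ⟨l, hl⟩ := by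
    intro l
    induction l with
    | nil => intro _; exact SimpleGraph.Reachable.refl _
    | cons y l ih =>
      intro hl
      refine (ih hl.tail).trans (SimpleGraph.Adj.reachable ?_)
      exact Or.inl ⟨y, rfl⟩
  have : Nonempty (RWord q) := ⟨⟨[], List.isChain_nil⟩⟩
  exact ⟨fun a b => (key a.1 a.2).symm.trans (key b.1 b.2)⟩

/-- Every edge `{y :: a, a}` is a bridge: once it is deleted, the set of words ending in `y :: a` is
closed under adjacency, and it does not contain `a`. -/
theorem wordGraph_acyclic (q : ℕ) : (wordGraph q).IsAcyclic := by
  have key : ∀ (a b : RWord q) (y : Fin (q + 1)), b.1 = y :: a.1 →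
      (wordGraph q).IsBridge s(b, a) := by
    intro a b y hab
    rw [SimpleGraph.isBridge_iff]
    rintro ⟨w⟩
    have inv : ∀ (c d : RWord q), ((wordGraph q).deleteEdges {s(b, a)}).Walk c d →
        b.1 <:+ c.1 → b.1 <:+ d.1 := by
      intro c d w
      induction w with
      | nil => exact id
      | @cons c e d h _ ih =>
        intro hc
        apply ih
        rw [SimpleGraph.deleteEdges_adj] at h
        rcases h.1 with ⟨z, hz⟩ | ⟨z, hz⟩
        · rw [hz]; exact hc.trans (List.suffix_cons _ _)
        · rw [hz, List.suffix_cons_iff] at hc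
          rcases hc with hc | hc
          · exfalso
            apply h.2
            have h1 : c = b := Subtype.ext (hz.trans hc.symm)
            have h2 : e = a := by
              rw [hab] at hc
              exact Subtype.ext (List.cons.inj hc).2.symm
            rw [h1, h2]; rfl
          · exact hc
    have h := (inv b a w List.suffix_rfl).length_le
    rw [hab] at h
    simp at h
  rw [SimpleGraph.isAcyclic_iff_forall_adj_isBridge]
  rintro a b (⟨y, h⟩ | ⟨y, h⟩)
  · rw [Sym2.eq_swap]; exact key a b y h
  · exact key b a y h

theorem wordGraph_ncard (q : ℕ) (a : RWord q) :
    ((wordGraph q).neighborSet a).ncard = q + 1 := by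
  obtain ⟨l, hl⟩ := a
  cases l with
  | nil =>
    let f : Fin (q + 1) → RWord q := fun y => ⟨[y], by simp⟩
    have hf : Function.Injective f := by
      intro y z h
      simpa [f] using congrArg Subtype.val h
    have : (wordGraph q).neighborSet ⟨[], hl⟩ = Set.range f := by
      ext b
      rw [SimpleGraph.mem_neighborSet, Set.mem_range]
      constructor
      · rintro (⟨y, h⟩ | ⟨y, h⟩)
        · exact ⟨y, Subtype.ext h.symm⟩
        · simp at h
      · rintro ⟨y, rfl⟩
        exact Or.inl ⟨y, rfl⟩
    rw [this, ← Set.image_univ, Set.ncard_image_of_injective _ hf, Set.ncard_univ]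
    simp
  | cons x l =>
    -- The letter `x` acts by cancelling the first letter, every other letter is prepended.
    let f : Fin (q + 1) → RWord q := fun y =>
      if h : y = x then ⟨l, hl.tail⟩ else ⟨y :: x :: l, List.isChain_cons_cons.2 ⟨h, hl⟩⟩
    have hf : Function.Injective f := by
      intro y z h
      have h' := congrArg Subtype.val h
      by_cases hy : y = x <;> by_cases hz : z = x
      · rw [hy, hz]
      · have := congrArg List.length h'
        simp [f, hy, hz] at this
        omega
      · have := congrArg List.length h'
        simp [f, hy, hz] at this
        omega
      · simpa [f, hy, hz] using h'
    have : (wordGraph q).neighborSet ⟨x :: l, hl⟩ = Set.range f := by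
      ext b
      rw [SimpleGraph.mem_neighborSet, Set.mem_range]
      constructor
      · rintro (⟨y, h⟩ | ⟨y, h⟩)
        · refine ⟨y, Subtype.ext ?_⟩
          have hb := b.2
          rw [h] at hb
          have : y ≠ x := (List.isChain_cons_cons.1 hb).1
          simp [f, this, h]
        · refine ⟨x, Subtype.ext ?_⟩
          simp only [f, dif_pos]
          exact (List.cons.inj h).2
      · rintro ⟨y, rfl⟩
        by_cases hy : y = x
        · refine Or.inr ⟨x, ?_⟩
          simp [f, hy]
        · refine Or.inl ⟨y, ?_⟩
          simp [f, hy]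
    rw [this, ← Set.image_univ, Set.ncard_image_of_injective _ hf, Set.ncard_univ]
    simp

theorem wordGraph_isHomTree (q : ℕ) : IsHomTree (wordGraph q) q :=
  ⟨wordGraph_connected q, wordGraph_acyclic q, wordGraph_ncard q⟩

/-! ### Positive semidefinite forms -/

theorem psd_sum_rank_one {X W : Type*} (S : Finset W) (f : W → X → ℝ)
    (n : ℕ) (x : Fin n → X) (z : Fin n → ℂ) :
    0 ≤ ∑ i, ∑ j, ((∑ v ∈ S, f v (x i) * f v (x j) : ℝ) : ℂ) * (starRingEnd ℂ) (z i) * z j := by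
  have h : ∑ i, ∑ j, ((∑ v ∈ S, f v (x i) * f v (x j) : ℝ) : ℂ) * (starRingEnd ℂ) (z i) * z j
      = ∑ v ∈ S, (starRingEnd ℂ) (∑ i, (f v (x i) : ℂ) * z i) * (∑ i, (f v (x i) : ℂ) * z i) := by
    simp_rw [map_sum, Finset.sum_mul_sum]
    rw [Finset.sum_comm]
    push_cast
    simp_rw [Finset.sum_mul]
    rw [Finset.sum_comm]
    simp_rw [Finset.sum_comm (s := S)]
    refine Finset.sum_congr rfl fun i _ => Finset.sum_congr rfl fun j _ =>
      Finset.sum_congr rfl fun v _ => ?_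
    rw [map_mul, Complex.conj_ofReal]
    ring
  rw [h]
  refine Finset.sum_nonneg fun v _ => ?_
  rw [mul_comm]
  exact mul_star_self_nonneg _

open Classical in
/-- The kernel `δ_{x,y} - 1/m` on pairs `x, y ∈ A` in the same fibre of `p`, and `0` on all other
pairs. When each fibre of `p` in `A` has `m` elements, it is the matrix of the orthogonal projection
onto the functions on `A` whose sum over every fibre vanishes. -/
noncomputable def fibreKernel {X W : Type*} (p : X → W) (A : Set X) (m : ℕ) (x y : X) : ℝ :=
  if x ∈ A ∧ y ∈ A ∧ p x = p y then (if x = y then 1 else 0) - 1 / (m : ℝ) else 0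

/-- As a projection `P` satisfies `P = Pᵀ P`, the kernel `fibreKernel p A m` is the finite sum over
`v` of the rank-one kernels `f_v(x) f_v(y)` with `f_v(x) = fibreKernel p A m v x`. -/
theorem psd_fibre {X W : Type*} (p : X → W) (A : Set X) (m : ℕ) (hm : m ≠ 0)
    (hfib : ∀ x ∈ A, {v | v ∈ A ∧ p v = p x}.ncard = m)
    (n : ℕ) (x : Fin n → X) (z : Fin n → ℂ) :
    0 ≤ ∑ i, ∑ j, (fibreKernel p A m (x i) (x j) : ℂ) * (starRingEnd ℂ) (z i) * z j := by
  classical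
  have hfin : ∀ i, {v | x i ∈ A ∧ v ∈ A ∧ p v = p (x i)}.Finite := by
    intro i
    by_cases hi : x i ∈ A
    · simp only [hi, true_and]
      apply Set.finite_of_ncard_ne_zero
      rw [hfib _ hi]
      exact hm
    · simp [hi]
  let S : Finset X := Finset.univ.biUnion fun i => (hfin i).toFinset
  let f : X → X → ℝ := fibreKernel p A m
  convert psd_sum_rank_one S f n x z using 8 with i _ j _
  by_cases h : x i ∈ A ∧ x j ∈ A ∧ p (x i) = p (x j)
  · obtain ⟨h1, h2, h3⟩ := h
    rw [fibreKernel, if_pos ⟨h1, h2, h3⟩]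
    have hsub : (hfin i).toFinset ⊆ S :=
      Finset.subset_biUnion_of_mem (fun i => (hfin i).toFinset) (Finset.mem_univ i)
    have hcard : (hfin i).toFinset.card = m := by
      rw [← Set.ncard_eq_toFinset_card _ (hfin i), ← hfib _ h1]
      simp [h1]
    have hmem : ∀ v, v ∈ (hfin i).toFinset ↔ v ∈ A ∧ p v = p (x i) := by
      intro v; simp [h1]
    rw [← Finset.sum_subset hsub]
    · have : ∀ v ∈ (hfin i).toFinset, f v (x i) * f v (x j) =
          ((if v = x i then (if x i = x j then 1 else 0) else 0)
            - (if v = x i then 1 / (m : ℝ) else 0))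
            - (if v = x j then 1 / (m : ℝ) else 0) + 1 / (m : ℝ) * (1 / m) := by
        intro v hv
        rw [hmem] at hv
        have e1 : f v (x i) = (if v = x i then 1 else 0) - 1 / (m : ℝ) :=
          if_pos ⟨hv.1, h1, hv.2⟩
        have e2 : f v (x j) = (if v = x j then 1 else 0) - 1 / (m : ℝ) :=
          if_pos ⟨hv.1, h2, hv.2.trans h3⟩
        rw [e1, e2]
        by_cases hvi : v = x i
        · rw [hvi, if_pos rfl, if_pos rfl, if_pos rfl]
          split_ifs <;> ring
        · simp only [if_neg hvi]
          split_ifs <;> ring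
      rw [Finset.sum_congr rfl this, Finset.sum_add_distrib, Finset.sum_sub_distrib,
        Finset.sum_sub_distrib, Finset.sum_ite_eq', Finset.sum_ite_eq', Finset.sum_ite_eq',
        Finset.sum_const, hcard]
      rw [if_pos ((hmem _).2 ⟨h1, rfl⟩), if_pos ((hmem _).2 ⟨h1, rfl⟩),
        if_pos ((hmem _).2 ⟨h2, h3.symm⟩)]
      have : (m : ℝ) ≠ 0 := by exact_mod_cast hm
      rw [nsmul_eq_mul]
      field_simp
      ring
    · intro v _ hv
      rw [hmem] at hv
      simp only [f, fibreKernel]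
      rw [if_neg, zero_mul]
      exact fun h => hv ⟨h.1, h.2.2⟩
  · rw [fibreKernel, if_neg h]
    symm
    apply Finset.sum_eq_zero
    intro v _
    simp only [f, fibreKernel]
    by_cases h1 : v ∈ A ∧ x i ∈ A ∧ p v = p (x i)
    · rw [if_neg (c := v ∈ A ∧ x j ∈ A ∧ p v = p (x j)), mul_zero]
      exact fun h2 => h ⟨h1.2.1, h2.2.1, h1.2.2.symm.trans h2.2.2⟩
    · rw [if_neg h1, zero_mul]

/-- Extension step: if `K` is positive definite on `B`, `π` maps `B'` into `B`, and on `B'` the kernel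
`K` is the pullback of `K|_B` along `π`, rescaled by `c(x) c(y)`, plus a nonnegative multiple of a
positive definite kernel `E`, then `K` is positive definite on `B'`. -/
theorem psd_step {X : Type*} (K : X → X → ℂ) (B : Set X) (π : X → X) (c : X → ℝ)
    (a : ℝ) (ha : 0 ≤ a) (E : X → X → ℝ)
    (hE : ∀ (n : ℕ) (x : Fin n → X) (z : Fin n → ℂ),
      0 ≤ ∑ i, ∑ j, (E (x i) (x j) : ℂ) * (starRingEnd ℂ) (z i) * z j)
    (B' : Set X) (hπ : ∀ x ∈ B', π x ∈ B)
    (hB : ∀ (n : ℕ) (x : Fin n → X) (z : Fin n → ℂ), (∀ i, x i ∈ B) →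
      0 ≤ ∑ i, ∑ j, K (x i) (x j) * (starRingEnd ℂ) (z i) * z j)
    (hK : ∀ x ∈ B', ∀ y ∈ B', K x y = (c x : ℂ) * c y * K (π x) (π y) + (a : ℂ) * E x y)
    (n : ℕ) (x : Fin n → X) (z : Fin n → ℂ) (hx : ∀ i, x i ∈ B') :
    0 ≤ ∑ i, ∑ j, K (x i) (x j) * (starRingEnd ℂ) (z i) * z j := by
  have h1 := hB n (fun i => π (x i)) (fun i => (c (x i) : ℂ) * z i) (fun i => hπ _ (hx i))
  have h2 := mul_nonneg (Complex.zero_le_real.2 ha) (hE n x z)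
  have h3 := add_nonneg h1 h2
  rw [Finset.mul_sum, ← Finset.sum_add_distrib] at h3
  convert h3 using 2 with i
  rw [Finset.mul_sum, ← Finset.sum_add_distrib]
  refine Finset.sum_congr rfl fun j _ => ?_
  rw [hK _ (hx i) _ (hx j), map_mul, Complex.conj_ofReal]
  ring

/-! ### The function `phi0` -/

theorem phi0_add_two (q n : ℕ) : phi0 q (n + 2) = -(1 / (q : ℂ)) * phi0 q n := by
  unfold phi0
  by_cases h : Even n
  · have h2 : Even (n + 2) := by simpa [Nat.even_add] using h
    rw [if_pos h, if_pos h2, Nat.add_div_right _ (by norm_num), pow_succ]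
    ring
  · have h2 : ¬ Even (n + 2) := by simpa [Nat.even_add] using h
    rw [if_neg h, if_neg h2, mul_zero]

theorem phi0_zero (q : ℕ) : phi0 q 0 = 1 := by simp [phi0]
theorem phi0_one (q : ℕ) : phi0 q 1 = 0 := by simp [phi0]
theorem phi0_two (q : ℕ) : phi0 q 2 = -(1 / (q : ℂ)) := by
  rw [phi0_add_two q 0, phi0_zero, mul_one]

/-! ### Positive definiteness of `phi0` on the tree and its failure on the product -/

/-- Positive definiteness on balls around `o`, by induction on the radius. Each vertex of the new
sphere is replaced by `-1/q` times its grandparent; the error is `(q+1)/q` times the fibre kernel of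
the parent map on that sphere. -/
theorem phi0_psd_ball {V : Type} {G : SimpleGraph V} {q : ℕ} (hq : 2 ≤ q) (hG : IsHomTree G q)
    (o : V) (N : ℕ) : ∀ (n : ℕ) (x : Fin n → V) (z : Fin n → ℂ),
      (∀ i, x i ∈ {v | G.dist o v ≤ N}) →
      0 ≤ ∑ i, ∑ j, phi0 q (G.dist (x i) (x j)) * (starRingEnd ℂ) (z i) * z j := by
  classical
  obtain ⟨hc, ha, hd⟩ := hG
  obtain ⟨p, hp⟩ := exists_parent hc o
  have hchild := children_ncard hc ha hd o p hp
  have hqC : (q : ℂ) ≠ 0 := by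
    have : q ≠ 0 := by omega
    exact_mod_cast this
  have hq1C : (q : ℂ) + 1 ≠ 0 := by exact_mod_cast Nat.succ_ne_zero q
  have hne : ∀ {x M}, G.dist o x = M + 1 → x ≠ o := by
    rintro x M h rfl
    simp at h
  have hA : ∀ M x, x ∈ {v | G.dist o v = M + 1} →
      {v | v ∈ {v | G.dist o v = M + 1} ∧ p v = p x} = {v | v ≠ o ∧ p v = p x} := by
    intro M x hx
    ext v
    simp only [Set.mem_ofPred_eq] at hx ⊢
    constructor
    · rintro ⟨h1, h2⟩
      exact ⟨hne h1, h2⟩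
    · rintro ⟨h1, h2⟩
      refine ⟨?_, h2⟩
      rw [(hp v h1).2, h2, ← (hp x (hne hx)).2, hx]
  have sib : ∀ {x y}, x ≠ o → y ≠ o → x ≠ y → p x = p y → G.dist x y = 2 := by
    intro x y hx hy hxy h
    have h1 := hp x hx
    have h2 := hp y hy
    rw [dist_parent hc ha h1.1 h1.2 (by rw [h1.2, h2.2, h]) hxy, h,
      SimpleGraph.dist_eq_one_iff_adj.2 h2.1]
  induction N with
  | zero =>
    intro n x z hx
    have hxo : ∀ i, x i = o := fun i => by
      have h : G.dist o (x i) ≤ 0 := hx i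
      exact (hc.dist_eq_zero_iff.1 (by omega)).symm
    have := psd_sum_rank_one {()} (fun _ _ => 1) n x z
    simpa [hxo, phi0_zero] using this
  | succ N ih =>
    rcases Nat.eq_zero_or_pos N with rfl | hN
    · -- A child of the root has no grandparent: its coefficient in the projection is `0`, and the fibre
      -- of the parent map is the whole sphere, of size `q + 1`.
      refine psd_step (fun x y => phi0 q (G.dist x y)) {v | G.dist o v ≤ 0} (fun _ => o)
        (fun x => if x = o then 1 else 0) ((q + 1) / q : ℝ) (by positivity)
        (fibreKernel p {v | G.dist o v = 0 + 1} (q + 1))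
        (psd_fibre p _ (q + 1) (by omega) ?_) {v | G.dist o v ≤ 0 + 1}
        ?_ ih ?_
      · intro x hx
        rw [hA 0 x hx, hchild, if_pos]
        have h1 : G.dist o x = 0 + 1 := hx
        have h2 := (hp x (hne hx)).2
        exact (hc.dist_eq_zero_iff.1 (by omega)).symm
      · intro x _
        simp
      · intro x hx y hy
        have key : ∀ x, G.dist o x ≤ 0 + 1 → x ≠ o → G.dist o x = 1 ∧ p x = o := by
          intro x hx h
          have h2 := (hp x h).2
          exact ⟨by omega, (hc.dist_eq_zero_iff.1 (by omega)).symm⟩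
        simp only [fibreKernel, Set.mem_ofPred_eq] at hx hy ⊢
        by_cases hxo : x = o <;> by_cases hyo : y = o
        · simp [hxo, hyo, phi0_zero]
        · simp [hxo, hyo, phi0_one, (key y hy hyo).1]
        · simp [hxo, hyo, phi0_one, G.dist_comm (v := o), (key x hx hxo).1]
        · obtain ⟨hx1, hx2⟩ := key x hx hxo
          obtain ⟨hy1, hy2⟩ := key y hy hyo
          rw [if_neg hxo, if_neg hyo, if_pos ⟨by omega, by omega, hx2.trans hy2.symm⟩]
          by_cases hxy : x = y
          · rw [hxy, if_pos rfl, SimpleGraph.dist_self, phi0_zero]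
            push_cast
            field_simp
            ring
          · rw [if_neg hxy, sib hxo hyo hxy (hx2.trans hy2.symm), phi0_two]
            push_cast
            field_simp
            ring
    · have hpp : ∀ {x}, G.dist o x = N + 1 → G.dist o (p x) = N ∧ p x ≠ o ∧
          G.dist o (p (p x)) + 1 = N := by
        intro x hx
        have h1 := (hp x (hne hx)).2
        have h2 : p x ≠ o := by
          intro h
          rw [h, SimpleGraph.dist_self] at h1
          omega
        have h3 := (hp _ h2).2
        exact ⟨by omega, h2, by omega⟩
      -- Replacing `x` by `-1/q` times its grandparent is exact when paired with the smaller ball.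
      have far : ∀ {x y}, G.dist o x = N + 1 → G.dist o y ≤ N →
          phi0 q (G.dist x y) = -(1 / (q : ℂ)) * phi0 q (G.dist (p (p x)) y) := by
        intro x y hx hy
        obtain ⟨h1, h2, h3⟩ := hpp hx
        have h4 := hp x (hne hx)
        have h5 := hp _ h2
        rw [dist_parent hc ha h4.1 h4.2 (by omega) (by rintro rfl; omega)]
        by_cases hxy : p x = y
        · subst hxy
          rw [SimpleGraph.dist_self, SimpleGraph.dist_eq_one_iff_adj.2 h5.1]
          simp [phi0_one]
        · rw [dist_parent hc ha h5.1 h5.2 (by omega) hxy, ← phi0_add_two]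
      refine psd_step (fun x y => phi0 q (G.dist x y)) {v | G.dist o v ≤ N}
        (fun x => if G.dist o x ≤ N then x else p (p x))
        (fun x => if G.dist o x ≤ N then 1 else -(1 / (q : ℝ))) ((q + 1) / q : ℝ)
        (by positivity) (fibreKernel p {v | G.dist o v = N + 1} q)
        (psd_fibre p _ q (by omega) ?_) {v | G.dist o v ≤ N + 1} ?_ ih ?_
      · intro x hx
        rw [hA N x hx, hchild, if_neg (hpp hx).2.1]
      · intro x hx
        simp only [Set.mem_ofPred_eq] at hx ⊢
        split_ifs with h
        · exact h
        · have := (hpp (x := x) (by omega)).2.2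
          omega
      · intro x hx y hy
        simp only [fibreKernel, Set.mem_ofPred_eq] at hx hy ⊢
        by_cases hxN : G.dist o x ≤ N <;> by_cases hyN : G.dist o y ≤ N
        · have h : ¬ G.dist o x = N + 1 := by omega
          simp [hxN, hyN, h]
        · have h : ¬ G.dist o x = N + 1 := by omega
          have hy' : G.dist o y = N + 1 := by omega
          have := far hy' hxN
          rw [G.dist_comm (u := x), this, G.dist_comm (v := x)]
          simp [hxN, hyN, h]
        · have h : ¬ G.dist o y = N + 1 := by omega
          have hx' : G.dist o x = N + 1 := by omega
          rw [far hx' hyN]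
          simp [hxN, hyN, h]
        · have hx' : G.dist o x = N + 1 := by omega
          have hy' : G.dist o y = N + 1 := by omega
          obtain ⟨hx1, hx2, hx3⟩ := hpp hx'
          obtain ⟨hy1, hy2, hy3⟩ := hpp hy'
          simp only [if_neg hxN, if_neg hyN]
          by_cases hpxy : p x = p y
          · rw [if_pos ⟨hx', hy', hpxy⟩, hpxy, SimpleGraph.dist_self, phi0_zero]
            by_cases hxy : x = y
            · rw [hxy, if_pos rfl, SimpleGraph.dist_self, phi0_zero]
              push_cast
              field_simp
              ring
            · rw [if_neg hxy, sib (hne hx') (hne hy') hxy hpxy, phi0_two]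
              push_cast
              field_simp
              ring
          · -- Distinct parents: `x` and `y` are joined through both grandparents, four steps longer.
            have hxy : x ≠ y := by
              rintro rfl
              exact hpxy rfl
            have e1 := hp x (hne hx')
            have e2 := hp y (hne hy')
            have e3 := hp _ hx2
            have e4 := hp _ hy2
            have d1 := dist_parent hc ha e1.1 e1.2 (by omega) hxy
            have d2 := dist_parent hc ha e2.1 e2.2 (y := p x) (by omega) (by rintro rfl; omega)
            have d3 := dist_parent hc ha e3.1 e3.2 (by omega) hpxy
            have d4 := dist_parent hc ha e4.1 e4.2 (y := p (p x)) (by omega)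
              (by intro h; rw [h] at hy1; omega)
            rw [G.dist_comm, G.dist_comm (v := p x)] at d2
            rw [G.dist_comm, G.dist_comm (v := p (p x))] at d4
            rw [if_neg (fun h => hpxy h.2.2), d1, d2, d3, d4, phi0_add_two, phi0_add_two]
            push_cast
            ring

theorem phi0_pd {V : Type} {G : SimpleGraph V} {q : ℕ} (hq : 2 ≤ q) (hG : IsHomTree G q) :
    IsPDKernel (fun x y => phi0 q (G.dist x y)) := by
  intro n x z
  obtain ⟨o⟩ := hG.1.nonempty
  exact phi0_psd_ball hq hG o (∑ i, G.dist o (x i)) n x z fun i =>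
    Finset.single_le_sum (f := fun i => G.dist o (x i)) (fun _ _ => Nat.zero_le _)
      (Finset.mem_univ i)

/-- The indicator of `N(w) × {w}`, where `N(w)` is the set of neighbours of `w`, has vanishing quadratic
form, as each row sum of the form is `phi0 0 + q * phi0 2 = 0`, yet it pairs with the point `(w, b)`,
`b` adjacent to `w`, to `(q + 1) * phi0 2 ≠ 0`. Adding that point makes the form equal to
`-1 - 2 / q < 0`. -/
theorem phi0_not_pd_prod {V : Type} {G : SimpleGraph V} {q : ℕ} (hq : 2 ≤ q)
    (hG : IsHomTree G q) :
    ¬ IsPDKernel (fun x y : V × V => phi0 q (G.dist x.1 y.1 + G.dist x.2 y.2)) := by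
  intro h
  obtain ⟨hc, ha, hd⟩ := hG
  obtain ⟨w⟩ := hc.nonempty
  have hfin : (G.neighborSet w).Finite := Set.finite_of_ncard_ne_zero (by rw [hd w]; omega)
  have := hfin.to_subtype
  have hcard : Nat.card (G.neighborSet w) = q + 1 := hd w
  let e : Fin (q + 1) ≃ G.neighborSet w := (Finite.equivFinOfCardEq hcard).symm
  have hadj : ∀ i, G.Adj w (e i) := fun i => (e i).2
  have hT : G.IsTree := ⟨hc, ha⟩
  have h1 : ∀ i, G.dist w (e i) = 1 := fun i => SimpleGraph.dist_eq_one_iff_adj.2 (hadj i)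
  have h1' : ∀ i, G.dist (e i) w = 1 := fun i =>
    SimpleGraph.dist_eq_one_iff_adj.2 (hadj i).symm
  have h2 : ∀ i j, phi0 q (G.dist (e i) (e j)) =
      (if i = j then 1 + 1 / (q : ℂ) else 0) + -(1 / (q : ℂ)) := by
    intro i j
    by_cases hij : i = j
    · rw [hij, if_pos rfl, SimpleGraph.dist_self, phi0_zero]
      ring
    · rw [if_neg hij, zero_add]
      have hne : ((e i : V)) ≠ e j := fun h => hij (e.injective (Subtype.ext h))
      have : G.dist (e i) (e j) = 2 := by
        rcases hT.dist_eq_dist_add_one_of_adj (e i) (hadj j) with h | h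
        · rw [h1'] at h
          exact absurd (hc.dist_eq_zero_iff.1 (by omega)) hne
        · rw [h, h1']
      rw [this, phi0_two]
  have hs := h (q + 2) (Fin.cons (w, (e 0 : V)) fun i => ((e i : V), w)) (fun _ => 1)
  simp only [map_one, mul_one, Fin.sum_univ_succ (n := q + 1), Fin.cons_zero, Fin.cons_succ,
    SimpleGraph.dist_self, add_zero, h1, h1', h2, phi0_zero, one_add_one_eq_two, phi0_two,
    Finset.sum_add_distrib, Finset.sum_ite_eq, Finset.mem_univ, if_true, Finset.sum_const,
    Finset.card_univ, Fintype.card_fin, nsmul_eq_mul] at hs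
  have hq0 : (q : ℂ) ≠ 0 := by
    have : q ≠ 0 := by omega
    exact_mod_cast this
  have hval : (0 : ℂ) ≤ ((-1 - 2 / q : ℝ) : ℂ) := by
    convert hs using 1
    push_cast
    field_simp
    ring
  rw [Complex.zero_le_real] at hval
  have : (0 : ℝ) ≤ 2 / q := by positivity
  linarith

theorem stmt_6 (q : ℕ) (hq : 2 ≤ q) :
    (∀ φ : ℕ → ℂ,
        (∀ (V₁ V₂ : Type) (G₁ : SimpleGraph V₁) (G₂ : SimpleGraph V₂),
            IsHomTree G₁ q → IsHomTree G₂ q →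
            IsPDKernel (fun x y : V₁ × V₂ =>
              φ (G₁.dist x.1 y.1 + G₂.dist x.2 y.2))) →
        (∀ (V : Type) (G : SimpleGraph V), IsHomTree G q →
            IsPDKernel (fun x y => φ (G.dist x y)))) ∧
    (∀ (V : Type) (G : SimpleGraph V), IsHomTree G q →
        IsPDKernel (fun x y => phi0 q (G.dist x y))) ∧
    ¬(∀ (V₁ V₂ : Type) (G₁ : SimpleGraph V₁) (G₂ : SimpleGraph V₂),
        IsHomTree G₁ q → IsHomTree G₂ q →
        IsPDKernel (fun x y : V₁ × V₂ =>
          phi0 q (G₁.dist x.1 y.1 + G₂.dist x.2 y.2))) := by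
  refine ⟨fun φ h V G hG n x z => ?_, fun V G hG => phi0_pd hq hG, fun h => ?_⟩
  · obtain ⟨o⟩ := hG.1.nonempty
    simpa using h V V G G hG hG n (fun i => (x i, o)) z
  · have hT := wordGraph_isHomTree q
    exact phi0_not_pd_prod hq hT (h _ _ _ _ hT hT)
end
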